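/- arXiv:2401.10093 — 3 statements merged into one kernel-verified Lean document; each statement's English description precedes it below -/
import Mathlib

section
/- Let M and M' be representations of the barbell quiver with potential whose maps f_c are isomorphisms, and let N and N' be finite direct sums of string modules M(acb(c⁻¹acb)ⁿ) with n ≥ 0. If M ⊕ N ≅ M' ⊕ N', then M ≅ M' and N ≅ N'. In other words, the decomposition of a representation as a direct sum of a representation with f_c invertible and a direct sum of the string modules M(acb(c⁻¹acb)ⁿ) is unique up to isomorphism. -/
/-!
# Statement 9

Work over `ℂ`.  The barbell quiver has vertices `1` and `2`, a loop `a` at vertex `1`, a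
loop `b` at vertex `2`, and an arrow `c : 1 → 2`; its potential is `W = a³ + b³`, whose
Jacobian relations are `a² = 0` and `b² = 0`.  Let `M` and `M'` be representations of the
barbell quiver with potential whose maps `f_c` are isomorphisms, and let `N` and `N'` be
finite direct sums of string modules `M(acb(c⁻¹acb)ⁿ)` with `n ≥ 0`.  If `M ⊕ N ≅ M' ⊕ N'`,
then `M ≅ M'` and `N ≅ N'`.
-/

noncomputable section
open Module

/-- A representation of the barbell quiver with potential `W = a³ + b³`: finite-dimensional
`ℂ`-vector spaces `V1, V2` and linear maps `fa : V1 → V1`, `fb : V2 → V2`, `fc : V1 → V2`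
satisfying the Jacobian relations `fa ∘ fa = 0` and `fb ∘ fb = 0`. -/
structure BarbellRep where
  V1 : Type
  V2 : Type
  [acg1 : AddCommGroup V1]
  [acg2 : AddCommGroup V2]
  [mod1 : Module ℂ V1]
  [mod2 : Module ℂ V2]
  [fd1 : FiniteDimensional ℂ V1]
  [fd2 : FiniteDimensional ℂ V2]
  fa : V1 →ₗ[ℂ] V1
  fb : V2 →ₗ[ℂ] V2
  fc : V1 →ₗ[ℂ] V2
  rel_a : fa ∘ₗ fa = 0
  rel_b : fb ∘ₗ fb = 0

attribute [instance] BarbellRep.acg1 BarbellRep.acg2 BarbellRep.mod1 BarbellRep.mod2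
  BarbellRep.fd1 BarbellRep.fd2

namespace BarbellRep

/-- The dimension vector `(dim V1, dim V2)`. -/
def dimVec (M : BarbellRep) : ℕ × ℕ := (finrank ℂ M.V1, finrank ℂ M.V2)

/-- A subrepresentation: a pair of submodules closed under the structure maps. -/
structure Sub (M : BarbellRep) where
  S1 : Submodule ℂ M.V1
  S2 : Submodule ℂ M.V2
  mapsto_a : ∀ x ∈ S1, M.fa x ∈ S1
  mapsto_b : ∀ y ∈ S2, M.fb y ∈ S2
  mapsto_c : ∀ x ∈ S1, M.fc x ∈ S2

/-- The dimension vector of a subrepresentation. -/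
def Sub.dimVec {M : BarbellRep} (L : M.Sub) : ℕ × ℕ := (finrank ℂ L.S1, finrank ℂ L.S2)

/-- The subrepresentation is nonzero. -/
def Sub.Nonzero {M : BarbellRep} (L : M.Sub) : Prop := L.S1 ≠ ⊥ ∨ L.S2 ≠ ⊥

/-- The subrepresentation is proper. -/
def Sub.Proper {M : BarbellRep} (L : M.Sub) : Prop := L.S1 ≠ ⊤ ∨ L.S2 ≠ ⊤

end BarbellRep

/-- Isomorphism of barbell representations. -/
def RepIso (M N : BarbellRep) : Prop :=
  ∃ (e1 : M.V1 ≃ₗ[ℂ] N.V1) (e2 : M.V2 ≃ₗ[ℂ] N.V2),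
    (∀ x, e1 (M.fa x) = N.fa (e1 x)) ∧ (∀ y, e2 (M.fb y) = N.fb (e2 y)) ∧
      (∀ x, e2 (M.fc x) = N.fc (e1 x))

/-- Componentwise direct sum of barbell representations. -/
def dsum (M N : BarbellRep) : BarbellRep where
  V1 := M.V1 × N.V1
  V2 := M.V2 × N.V2
  fa := M.fa.prodMap N.fa
  fb := M.fb.prodMap N.fb
  fc := M.fc.prodMap N.fc
  rel_a := by
    apply LinearMap.ext
    rintro ⟨x, y⟩
    have h1 := LinearMap.congr_fun M.rel_a x
    have h2 := LinearMap.congr_fun N.rel_a y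
    simp only [LinearMap.comp_apply, LinearMap.prodMap_apply, LinearMap.zero_apply] at h1 h2 ⊢
    simp [h1, h2]
  rel_b := by
    apply LinearMap.ext
    rintro ⟨x, y⟩
    have h1 := LinearMap.congr_fun M.rel_b x
    have h2 := LinearMap.congr_fun N.rel_b y
    simp only [LinearMap.comp_apply, LinearMap.prodMap_apply, LinearMap.zero_apply] at h1 h2 ⊢
    simp [h1, h2]

/-- The zero representation. -/
def zeroRep : BarbellRep where
  V1 := Fin 0 → ℂ
  V2 := Fin 0 → ℂ
  fa := 0
  fb := 0
  fc := 0
  rel_a := by simp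
  rel_b := by simp

/-- Direct sum of a finite list of barbell representations. -/
def dsumList (l : List BarbellRep) : BarbellRep := l.foldr dsum zeroRep

/-! ## The string modules `M(acb(c⁻¹acb)ⁿ)`

The walk `acb(c⁻¹acb)ⁿ` has length `4n + 3` and `4n + 4` vertex-instances `z₀, …, z_{4n+3}`,
where `z_{4k}, z_{4k+1}` lie at vertex `1` and `z_{4k+2}, z_{4k+3}` lie at vertex `2`
(`0 ≤ k ≤ n`).  We realise the string module with
`V1 = V2 = (Fin (n+1) × Bool) → ℂ`, where `(k, false)` indexes `z_{4k}` in `V1` (resp.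
`z_{4k+2}` in `V2`) and `(k, true)` indexes `z_{4k+1}` in `V1` (resp. `z_{4k+3}` in `V2`).
The structure maps of the string module are:
`f_a(z_{4k}) = z_{4k+1}`, `f_b(z_{4k+2}) = z_{4k+3}`, `f_c(z_{4k+1}) = z_{4k+2}` (letter `c`)
and `f_c(z_{4k+4}) = z_{4k+3}` (letter `c⁻¹`), all other basis vectors mapping to `0`. -/

/-- The map sending the basis vector indexed `(k, false)` to the one indexed `(k, true)`
and killing the others; this is `f_a` (and also `f_b`) of the string module. -/
def strFa (n : ℕ) : ((Fin (n + 1) × Bool) → ℂ) →ₗ[ℂ] ((Fin (n + 1) × Bool) → ℂ) where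
  toFun v p := if p.2 then v (p.1, false) else 0
  map_add' u v := by
    funext p
    by_cases h : p.2 <;> simp [h]
  map_smul' c v := by
    funext p
    by_cases h : p.2 <;> simp [h]

/-- The map `f_c` of the string module `M(acb(c⁻¹acb)ⁿ)`:
`f_c(z_{4k+1}) = z_{4k+2}` and `f_c(z_{4k+4}) = z_{4k+3}`, i.e. the coefficient of the output
at `z_{4k+2}` is the input coefficient at `z_{4k+1}`, and the coefficient of the output at
`z_{4k+3}` is the input coefficient at `z_{4k+4}` (when `k + 1 ≤ n`). -/
def strFc (n : ℕ) : ((Fin (n + 1) × Bool) → ℂ) →ₗ[ℂ] ((Fin (n + 1) × Bool) → ℂ) where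
  toFun v p :=
    if p.2 then
      (if h : (p.1 : ℕ) + 1 < n + 1 then v (⟨(p.1 : ℕ) + 1, h⟩, false) else 0)
    else v (p.1, true)
  map_add' u v := by
    funext p
    by_cases h : p.2
    · simp only [h, if_true, Pi.add_apply]
      split <;> simp
    · simp [h]
  map_smul' c v := by
    funext p
    by_cases h : p.2
    · simp only [h, if_true, Pi.smul_apply, RingHom.id_apply]
      split <;> simp
    · simp [h]

/-- The string module `M(acb(c⁻¹acb)ⁿ)`. -/
def Mstring (n : ℕ) : BarbellRep where
  V1 := (Fin (n + 1) × Bool) → ℂ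
  V2 := (Fin (n + 1) × Bool) → ℂ
  fa := strFa n
  fb := strFa n
  fc := strFc n
  rel_a := by
    apply LinearMap.ext
    intro v
    funext p
    by_cases h : p.2 <;> simp [strFa, h]
  rel_b := by
    apply LinearMap.ext
    intro v
    funext p
    by_cases h : p.2 <;> simp [strFa, h]

/-!
The representations form a preadditive category in which `dsum` is a biproduct, and a morphism from
a string module `M(acb(c⁻¹acb)ⁿ)` to a representation with injective `f_c` vanishes: it kills `z₀`
because `f_c z₀ = 0`, and this propagates along the walk, forwards along `a`, `c`, `b` and
backwards along `c⁻¹` by injectivity. Hence both an isomorphism `M ⊕ N ≅ M' ⊕ N'` and its inverse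
are block triangular. Their blocks `M ⟶ M'` and `M' ⟶ M` are then mutually inverse, and Gaussian
elimination gives `N ≅ N'`.
-/

section Biproduct

open CategoryTheory Limits

variable {C : Type*} [Category* C] [HasZeroMorphisms C] {X X' Y Y' : C}
  [HasBinaryBiproduct X Y] [HasBinaryBiproduct X' Y']

theorem biprod_inl_hom_fst_comp_inl_inv_fst (e : X ⊞ Y ≅ X' ⊞ Y') [Subsingleton (Y' ⟶ X)] :
    (biprod.inl ≫ e.hom ≫ biprod.fst) ≫ biprod.inl ≫ e.inv ≫ biprod.fst = 𝟙 X := by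
  have h : biprod.inr ≫ e.inv ≫ biprod.fst = 0 := Subsingleton.elim _ _
  have h' : biprod.fst ≫ biprod.inl ≫ e.inv ≫ biprod.fst = e.inv ≫ biprod.fst := by
    ext <;> simp [h]
  simp [h']

theorem isIso_biprod_inl_hom_fst (e : X ⊞ Y ≅ X' ⊞ Y') [Subsingleton (Y ⟶ X')]
    [Subsingleton (Y' ⟶ X)] : IsIso (biprod.inl ≫ e.hom ≫ biprod.fst) :=
  ⟨biprod.inl ≫ e.inv ≫ biprod.fst, biprod_inl_hom_fst_comp_inl_inv_fst e,
    biprod_inl_hom_fst_comp_inl_inv_fst e.symm⟩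

end Biproduct

namespace BarbellRep

open CategoryTheory Limits

/-- The space of morphisms of representations `M ⟶ N`, realised inside the space of all pairs of
linear maps so as to inherit its additive structure. -/
def homSubmodule (M N : BarbellRep) :
    Submodule ℂ ((M.V1 →ₗ[ℂ] N.V1) × (M.V2 →ₗ[ℂ] N.V2)) where
  carrier := {g | (∀ x, g.1 (M.fa x) = N.fa (g.1 x)) ∧ (∀ y, g.2 (M.fb y) = N.fb (g.2 y)) ∧
    ∀ x, g.2 (M.fc x) = N.fc (g.1 x)}
  add_mem' := by
    rintro g h ⟨ga, gb, gc⟩ ⟨ha, hb, hc⟩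
    simp [ga, gb, gc, ha, hb, hc]
  zero_mem' := by simp
  smul_mem' := by
    rintro r g ⟨ga, gb, gc⟩
    simp [ga, gb, gc]

instance : Category BarbellRep where
  Hom M N := homSubmodule M N
  id M := ⟨(.id, .id), by simp [homSubmodule]⟩
  comp f g := ⟨(g.1.1 ∘ₗ f.1.1, g.1.2 ∘ₗ f.1.2), by
    obtain ⟨f, fa, fb, fc⟩ := f
    obtain ⟨g, ga, gb, gc⟩ := g
    simp [homSubmodule, fa, fb, fc, ga, gb, gc]⟩

section Hom

variable {M N P : BarbellRep}

/-- The component of a morphism at the vertex `1`. -/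
def map₁ (f : M ⟶ N) : M.V1 →ₗ[ℂ] N.V1 := f.1.1

/-- The component of a morphism at the vertex `2`. -/
def map₂ (f : M ⟶ N) : M.V2 →ₗ[ℂ] N.V2 := f.1.2

theorem map₁_fa (f : M ⟶ N) (x : M.V1) : map₁ f (M.fa x) = N.fa (map₁ f x) := f.2.1 x

theorem map₂_fb (f : M ⟶ N) (y : M.V2) : map₂ f (M.fb y) = N.fb (map₂ f y) := f.2.2.1 y

theorem map₂_fc (f : M ⟶ N) (x : M.V1) : map₂ f (M.fc x) = N.fc (map₁ f x) := f.2.2.2 x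

theorem hom_ext {f g : M ⟶ N} (h₁ : map₁ f = map₁ g) (h₂ : map₂ f = map₂ g) : f = g :=
  Subtype.ext (Prod.ext h₁ h₂)

@[simp]
theorem map₁_comp (f : M ⟶ N) (g : N ⟶ P) : map₁ (f ≫ g) = map₁ g ∘ₗ map₁ f := rfl

@[simp]
theorem map₂_comp (f : M ⟶ N) (g : N ⟶ P) : map₂ (f ≫ g) = map₂ g ∘ₗ map₂ f := rfl

instance : AddCommGroup (M ⟶ N) := inferInstanceAs (AddCommGroup (homSubmodule M N))

@[simp]
theorem map₁_add (f g : M ⟶ N) : map₁ (f + g) = map₁ f + map₁ g := rfl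

@[simp]
theorem map₂_add (f g : M ⟶ N) : map₂ (f + g) = map₂ f + map₂ g := rfl

end Hom

instance : Preadditive BarbellRep where
  add_comp _ _ _ f f' g := hom_ext (by simp [LinearMap.comp_add]) (by simp [LinearMap.comp_add])
  comp_add _ _ _ f g g' := hom_ext (by simp [LinearMap.add_comp]) (by simp [LinearMap.add_comp])

theorem repIso_iff_nonempty_iso {M N : BarbellRep} : RepIso M N ↔ Nonempty (M ≅ N) := by
  constructor
  · rintro ⟨e₁, e₂, ha, hb, hc⟩
    refine ⟨⟨⟨(e₁, e₂), ha, hb, hc⟩, ⟨(e₁.symm, e₂.symm), fun x ↦ ?_, fun y ↦ ?_, fun x ↦ ?_⟩,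
      hom_ext ?_ ?_, hom_ext ?_ ?_⟩⟩
    · simp [LinearEquiv.symm_apply_eq, ha]
    · simp [LinearEquiv.symm_apply_eq, hb]
    · simp [LinearEquiv.symm_apply_eq, hc]
    · exact e₁.symm_comp
    · exact e₂.symm_comp
    · exact e₁.comp_symm
    · exact e₂.comp_symm
  · rintro ⟨e⟩
    exact ⟨.ofLinearMap (map₁ e.hom) (map₁ e.inv) (congrArg map₁ e.inv_hom_id)
        (congrArg map₁ e.hom_inv_id),
      .ofLinearMap (map₂ e.hom) (map₂ e.inv) (congrArg map₂ e.inv_hom_id)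
        (congrArg map₂ e.hom_inv_id),
      map₁_fa e.hom, map₂_fb e.hom, map₂_fc e.hom⟩

section DirectSum

/-- The direct sum `dsum M N` with its projections and inclusions. -/
def dsumBicone (M N : BarbellRep) : BinaryBicone M N where
  pt := dsum M N
  fst := ⟨(.fst ℂ _ _, .fst ℂ _ _), fun _ ↦ rfl, fun _ ↦ rfl, fun _ ↦ rfl⟩
  snd := ⟨(.snd ℂ _ _, .snd ℂ _ _), fun _ ↦ rfl, fun _ ↦ rfl, fun _ ↦ rfl⟩
  inl := ⟨(.inl ℂ _ _, .inl ℂ _ _), fun _ ↦ Prod.ext rfl (map_zero N.fa).symm,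
    fun _ ↦ Prod.ext rfl (map_zero N.fb).symm, fun _ ↦ Prod.ext rfl (map_zero N.fc).symm⟩
  inr := ⟨(.inr ℂ _ _, .inr ℂ _ _), fun _ ↦ Prod.ext (map_zero M.fa).symm rfl,
    fun _ ↦ Prod.ext (map_zero M.fb).symm rfl, fun _ ↦ Prod.ext (map_zero M.fc).symm rfl⟩
  inl_fst := rfl
  inl_snd := rfl
  inr_fst := rfl
  inr_snd := rfl

/-- The direct sum `dsum M N` is a biproduct. -/
def dsumBiconeIsBilimit (M N : BarbellRep) : (dsumBicone M N).IsBilimit :=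
  isBinaryBilimitOfTotal _ <| hom_ext
    (LinearMap.ext fun x ↦ Prod.fst_add_snd x) (LinearMap.ext fun x ↦ Prod.fst_add_snd x)

instance : HasBinaryBiproducts BarbellRep where
  has_binary_biproduct M N := .mk ⟨dsumBicone M N, dsumBiconeIsBilimit M N⟩

/-- The comparison of the explicit direct sum `dsum M N` with the chosen biproduct `M ⊞ N`, to
which Gaussian elimination applies. -/
def dsumIsoBiprod (M N : BarbellRep) : dsum M N ≅ M ⊞ N :=
  biprod.uniqueUpToIso M N (dsumBiconeIsBilimit M N)

variable {M N P : BarbellRep}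

instance subsingleton_hom_dsum [Subsingleton (N ⟶ M)] [Subsingleton (P ⟶ M)] :
    Subsingleton (dsum N P ⟶ M) :=
  ⟨fun _ _ ↦ BinaryCofan.IsColimit.hom_ext (dsumBiconeIsBilimit N P).isColimit
    (Subsingleton.elim (α := N ⟶ M) _ _) (Subsingleton.elim (α := P ⟶ M) _ _)⟩

instance subsingleton_hom_zeroRep : Subsingleton (zeroRep ⟶ M) where
  allEq _ _ := hom_ext (LinearMap.pi_ext' fun i ↦ i.elim0) (LinearMap.pi_ext' fun i ↦ i.elim0)

theorem subsingleton_hom_dsumList {l : List BarbellRep} (h : ∀ N ∈ l, Subsingleton (N ⟶ M)) :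
    Subsingleton (dsumList l ⟶ M) := by
  induction l with
  | nil => exact subsingleton_hom_zeroRep
  | cons N l ih =>
    rw [List.forall_mem_cons] at h
    have := h.1
    have := ih h.2
    exact subsingleton_hom_dsum (P := dsumList l)

theorem repIso_and_repIso_of_dsum {M' N' : BarbellRep} [Subsingleton (N ⟶ M')]
    [Subsingleton (N' ⟶ M)] (h : RepIso (dsum M N) (dsum M' N')) : RepIso M M' ∧ RepIso N N' := by
  simp only [repIso_iff_nonempty_iso] at h ⊢
  obtain ⟨e⟩ := h
  let e' : M ⊞ N ≅ M' ⊞ N' := (dsumIsoBiprod M N).symm ≪≫ e ≪≫ dsumIsoBiprod M' N'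
  have := isIso_biprod_inl_hom_fst e'
  exact ⟨⟨asIso (biprod.inl ≫ e'.hom ≫ biprod.fst)⟩, ⟨Biprod.isoElim e'⟩⟩

end DirectSum

end BarbellRep

namespace Mstring

open CategoryTheory BarbellRep

variable (n : ℕ)

/-- The basis of `V1`: the vector `z_{4k}` has index `(k, false)` and `z_{4k+1}` has index
`(k, true)`. -/
def basis₁ : Basis (Fin (n + 1) × Bool) ℂ (Mstring n).V1 := Pi.basisFun ℂ _

/-- The basis of `V2`: the vector `z_{4k+2}` has index `(k, false)` and `z_{4k+3}` has index
`(k, true)`. -/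
def basis₂ : Basis (Fin (n + 1) × Bool) ℂ (Mstring n).V2 := Pi.basisFun ℂ _

theorem fa_basis₁_false (k : Fin (n + 1)) :
    (Mstring n).fa (basis₁ n (k, false)) = basis₁ n (k, true) := by
  change strFa n (Pi.basisFun ℂ _ (k, false)) = Pi.basisFun ℂ _ (k, true)
  ext ⟨i, b⟩
  cases b <;> simp [strFa, Pi.single_apply]

theorem fb_basis₂_false (k : Fin (n + 1)) :
    (Mstring n).fb (basis₂ n (k, false)) = basis₂ n (k, true) :=
  fa_basis₁_false n k

theorem fc_basis₁_true (k : Fin (n + 1)) :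
    (Mstring n).fc (basis₁ n (k, true)) = basis₂ n (k, false) := by
  change strFc n (Pi.basisFun ℂ _ (k, true)) = Pi.basisFun ℂ _ (k, false)
  ext ⟨i, b⟩
  cases b <;> simp [strFc, Pi.single_apply]

theorem fc_basis₁_zero : (Mstring n).fc (basis₁ n (0, false)) = 0 := by
  change strFc n (Pi.basisFun ℂ _ (0, false)) = 0
  ext ⟨i, b⟩
  cases b <;> simp [strFc]

theorem fc_basis₁_succ (k : Fin n) :
    (Mstring n).fc (basis₁ n (k.succ, false)) = basis₂ n (k.castSucc, true) := by
  change strFc n (Pi.basisFun ℂ _ (k.succ, false)) = Pi.basisFun ℂ _ (k.castSucc, true)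
  ext ⟨i, b⟩
  cases b
  · simp [strFc]
  · simp only [strFc, Pi.basisFun_apply, Pi.single_apply, LinearMap.coe_mk, AddHom.coe_mk,
      Prod.mk.injEq, Fin.ext_iff, Fin.val_succ, Fin.val_castSucc]
    grind

variable {n} {M : BarbellRep}

theorem map_basis_eq_zero_of_false (f : Mstring n ⟶ M) {k : Fin (n + 1)}
    (h : map₁ f (basis₁ n (k, false)) = 0) :
    (∀ b, map₁ f (basis₁ n (k, b)) = 0) ∧ ∀ b, map₂ f (basis₂ n (k, b)) = 0 := by
  have h₁ : map₁ f (basis₁ n (k, true)) = 0 := by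
    rw [← fa_basis₁_false, map₁_fa, h, map_zero]
  have h₂ : map₂ f (basis₂ n (k, false)) = 0 := by
    rw [← fc_basis₁_true, map₂_fc, h₁, map_zero]
  have h₃ : map₂ f (basis₂ n (k, true)) = 0 := by
    rw [← fb_basis₂_false, map₂_fb, h₂, map_zero]
  exact ⟨Bool.forall_bool.2 ⟨h, h₁⟩, Bool.forall_bool.2 ⟨h₂, h₃⟩⟩

theorem map₁_basis₁_false_eq_zero (f : Mstring n ⟶ M) (hM : Function.Injective M.fc)
    (k : Fin (n + 1)) : map₁ f (basis₁ n (k, false)) = 0 := by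
  induction k using Fin.induction with
  | zero => rw [← map_eq_zero_iff M.fc hM, ← map₂_fc, fc_basis₁_zero, map_zero]
  | succ k ih =>
    rw [← map_eq_zero_iff M.fc hM, ← map₂_fc, fc_basis₁_succ,
      (map_basis_eq_zero_of_false f ih).2]

theorem subsingleton_hom (hM : Function.Injective M.fc) : Subsingleton (Mstring n ⟶ M) := by
  refine subsingleton_of_forall_eq 0 fun f ↦ ?_
  have h (k) := map_basis_eq_zero_of_false f (map₁_basis₁_false_eq_zero f hM k)
  exact hom_ext ((basis₁ n).ext fun ⟨k, b⟩ ↦ (h k).1 b) ((basis₂ n).ext fun ⟨k, b⟩ ↦ (h k).2 b)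

theorem subsingleton_hom_dsumList (hM : Function.Injective M.fc) (l : List ℕ) :
    Subsingleton (dsumList (l.map Mstring) ⟶ M) :=
  BarbellRep.subsingleton_hom_dsumList <| List.forall_mem_map.2 fun _ _ ↦ subsingleton_hom hM

end Mstring

theorem barbell_decomposition_unique_general (M M' : BarbellRep)
    (hM : Function.Injective M.fc) (hM' : Function.Injective M'.fc) (l l' : List ℕ)
    (h : RepIso (dsum M (dsumList (l.map Mstring))) (dsum M' (dsumList (l'.map Mstring)))) :
    RepIso M M' ∧ RepIso (dsumList (l.map Mstring)) (dsumList (l'.map Mstring)) := by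
  have := Mstring.subsingleton_hom_dsumList hM' l
  have := Mstring.subsingleton_hom_dsumList hM l'
  exact BarbellRep.repIso_and_repIso_of_dsum h

/-- Let `M` and `M'` be representations of the barbell quiver with
potential whose maps `f_c` are isomorphisms, and let `N = ⊕_{n ∈ l} M(acb(c⁻¹acb)ⁿ)` and
`N' = ⊕_{n ∈ l'} M(acb(c⁻¹acb)ⁿ)` be finite direct sums of the string modules.  If
`M ⊕ N ≅ M' ⊕ N'` then `M ≅ M'` and `N ≅ N'`: the decomposition is unique up to
isomorphism. -/
theorem barbell_decomposition_unique
    (M M' : BarbellRep)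
    (hM : Function.Bijective M.fc) (hM' : Function.Bijective M'.fc)
    (l l' : List ℕ)
    (h : RepIso (dsum M (dsumList (l.map Mstring))) (dsum M' (dsumList (l'.map Mstring)))) :
    RepIso M M' ∧ RepIso (dsumList (l.map Mstring)) (dsumList (l'.map Mstring)) :=
  barbell_decomposition_unique_general M M' hM.injective hM'.injective l l' h
end
end

section
/- Fix a central charge Z : ℤ² → ℂ with φ(0,1) < φ(1,0), and set θ := φ(1,1). Then the string module M(acb) is stable, and every stable representation of the barbell quiver with potential of phase θ whose map f_c is not an isomorphism is isomorphic to M(acb). In particular, for every n ≥ 1 the string module M(acb(c⁻¹acb)ⁿ) is semistable of phase θ but not stable. -/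
/-!
# Statement 10

Work over `ℂ`.  The barbell quiver has vertices `1` and `2`, a loop `a` at vertex `1`, a loop
`b` at vertex `2`, and an arrow `c : 1 → 2`; its potential is `W = a³ + b³`, whose Jacobian
relations are `a² = 0` and `b² = 0`.  Fix a central charge `Z : ℤ² → ℂ` with
`φ(0,1) < φ(1,0)`, and set `θ := φ(1,1)`.  Then the string module `M(acb)` is stable, and
every stable representation of the barbell quiver with potential of phase `θ` whose map
`f_c` is not an isomorphism is isomorphic to `M(acb)`.  In particular, for every `n ≥ 1` the
string module `M(acb(c⁻¹acb)ⁿ)` is semistable of phase `θ` but not stable.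
-/

noncomputable section
open Module

/-- The set `ℍ = {r·exp(iπφ) : r > 0, 0 < φ ≤ 1} ⊆ ℂ`. -/
def UpperH : Set ℂ :=
  {z | ∃ r φ : ℝ, 0 < r ∧ 0 < φ ∧ φ ≤ 1 ∧ z = (r : ℂ) * Complex.exp ((Real.pi * φ : ℝ) * Complex.I)}

/-- The phase `φ ∈ (0, 1]` of a complex number `z ∈ ℍ`: if `z = r·exp(iπφ)` with `r > 0` and
`0 < φ ≤ 1`, then `Complex.arg z = π·φ`, so that `phase z = φ` is the unique `φ ∈ (0,1]` with
`z ∈ ℝ_{>0}·exp(iπφ)`. -/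
def phase (z : ℂ) : ℝ := Complex.arg z / Real.pi

/-- The value of the central charge on a dimension vector in `ℕ²`. -/
def chargeOf (Z : ℤ × ℤ →+ ℂ) (d : ℕ × ℕ) : ℂ := Z ((d.1 : ℤ), (d.2 : ℤ))

/-- A nonzero representation `M` is semistable if `φ(dim L) ≤ φ(dim M)` for every nonzero
proper subrepresentation `L` of `M`. -/
def IsSemistable (Z : ℤ × ℤ →+ ℂ) (M : BarbellRep) : Prop :=
  M.dimVec ≠ (0, 0) ∧
    ∀ L : M.Sub, L.Nonzero → L.Proper →
      phase (chargeOf Z L.dimVec) ≤ phase (chargeOf Z M.dimVec)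

/-- A nonzero representation `M` is stable if `φ(dim L) < φ(dim M)` for every nonzero
proper subrepresentation `L` of `M`. -/
def IsStable (Z : ℤ × ℤ →+ ℂ) (M : BarbellRep) : Prop :=
  M.dimVec ≠ (0, 0) ∧
    ∀ L : M.Sub, L.Nonzero → L.Proper →
      phase (chargeOf Z L.dimVec) < phase (chargeOf Z M.dimVec)

/-!
Since `φ(0,1) < φ(1,0)`, phases of dimension vectors are ordered by slope, and phase `θ` means
`dim V₁ = dim V₂`. On the string modules `c a + a c = 1` under the identification `V₁ = V₂`, so
every subrepresentation `L` has `L₁ ⊆ L₂`; this gives semistability, and for `M(acb)`, where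
`a` and `c` generate all of `M₂(ℂ)`, stability. If `M` has phase `θ` and `c` is not bijective,
then `c x = 0` for some `x ≠ 0`, and `z₀ ↦ x` extends to a nonzero morphism `M(acb) → M`, which
Schur's lemma makes an isomorphism when `M` is stable. For `M(acb(c⁻¹acb)ⁿ)` with `n ≥ 1` this is
impossible by dimension, hence it is not stable.
-/

open scoped ComplexConjugate

/-! ## Phases -/

theorem mem_upperH_iff_arg_pos {z : ℂ} : z ∈ UpperH ↔ 0 < z.arg := by
  constructor
  · rintro ⟨r, φ, hr, hφ₀, hφ₁, rfl⟩
    rw [Complex.arg_real_mul _ hr, Complex.exp_mul_I, Complex.arg_cos_add_sin_mul_I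
      ⟨by nlinarith [Real.pi_pos], by nlinarith [Real.pi_pos]⟩]
    exact mul_pos Real.pi_pos hφ₀
  · intro hz
    refine ⟨‖z‖, z.arg / Real.pi, norm_pos_iff.2 ?_, div_pos hz Real.pi_pos,
      (div_le_one Real.pi_pos).2 z.arg_le_pi, ?_⟩
    · rintro rfl
      simp at hz
    · rw [mul_div_cancel₀ _ Real.pi_ne_zero, Complex.norm_mul_exp_arg_mul_I]

theorem mem_upperH_iff {z : ℂ} : z ∈ UpperH ↔ 0 ≤ z.im ∧ (z.im = 0 → z.re < 0) := by
  rw [mem_upperH_iff_arg_pos, lt_iff_le_and_ne, Complex.arg_nonneg_iff, ne_comm, Ne,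
    Complex.arg_eq_zero_iff, not_and', not_le]

theorem add_mem_upperH {z w : ℂ} (hz : z ∈ UpperH) (hw : w ∈ UpperH) : z + w ∈ UpperH := by
  rw [mem_upperH_iff] at hz hw ⊢
  refine ⟨add_nonneg hz.1 hw.1, fun him => ?_⟩
  obtain ⟨hz₀, hw₀⟩ := (add_eq_zero_iff_of_nonneg hz.1 hw.1).1 him
  exact add_neg (hz.2 hz₀) (hw.2 hw₀)

theorem nsmul_mem_upperH {z : ℂ} (hz : z ∈ UpperH) {n : ℕ} (hn : n ≠ 0) : n • z ∈ UpperH := by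
  induction n, Nat.one_le_iff_ne_zero.2 hn using Nat.le_induction with
  | base => rwa [one_smul]
  | succ n hn₁ ih => exact succ_nsmul z n ▸ add_mem_upperH (ih (Nat.one_le_iff_ne_zero.1 hn₁)) hz

theorem im_conj_mul_eq_norm_mul_sin (z w : ℂ) :
    (conj z * w).im = ‖z‖ * ‖w‖ * Real.sin (w.arg - z.arg) := by
  calc (conj z * w).im = z.re * w.im - z.im * w.re := by
        rw [Complex.mul_im, Complex.conj_re, Complex.conj_im]; ring
    _ = ‖z‖ * ‖w‖ * Real.sin (w.arg - z.arg) := by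
        rw [Real.sin_sub, ← Complex.norm_mul_cos_arg z, ← Complex.norm_mul_sin_arg z,
          ← Complex.norm_mul_cos_arg w, ← Complex.norm_mul_sin_arg w]
        ring

theorem phase_lt_phase_iff {z w : ℂ} (hz : z ∈ UpperH) (hw : w ∈ UpperH) :
    phase z < phase w ↔ 0 < (conj z * w).im := by
  rw [mem_upperH_iff_arg_pos] at hz hw
  have hnorm : 0 < ‖z‖ * ‖w‖ := by
    refine mul_pos (norm_pos_iff.2 ?_) (norm_pos_iff.2 ?_) <;> rintro rfl <;> simp at hz hw
  have hz_le := z.arg_le_pi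
  have hw_le := w.arg_le_pi
  rw [phase, phase, div_lt_div_iff_of_pos_right Real.pi_pos, im_conj_mul_eq_norm_mul_sin,
    mul_pos_iff_of_pos_left hnorm]
  refine ⟨fun h => Real.sin_pos_of_pos_of_lt_pi (by linarith) (by linarith), fun h => ?_⟩
  contrapose! h
  exact Real.sin_nonpos_of_nonpos_of_neg_pi_le (by linarith) (by linarith)

theorem phase_lt_phase_add_iff_phase_add_lt {z w : ℂ} (hz : z ∈ UpperH) (hw : w ∈ UpperH) :
    phase z < phase (z + w) ↔ phase (z + w) < phase w := by
  have hzw := add_mem_upperH hz hw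
  rw [phase_lt_phase_iff hz hzw, phase_lt_phase_iff hzw hw]
  simp only [Complex.mul_im, Complex.add_re, Complex.add_im, Complex.conj_re, Complex.conj_im]
  ring_nf

/-! ## Central charges -/

theorem chargeOf_add (Z : ℤ × ℤ →+ ℂ) (d e : ℕ × ℕ) :
    chargeOf Z (d + e) = chargeOf Z d + chargeOf Z e := by
  simp only [chargeOf, ← map_add, Prod.mk_add_mk, Prod.fst_add, Prod.snd_add, Nat.cast_add]

theorem chargeOf_eq_nsmul_add_nsmul (Z : ℤ × ℤ →+ ℂ) (d : ℕ × ℕ) :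
    chargeOf Z d = d.1 • Z (1, 0) + d.2 • Z (0, 1) := by
  rw [chargeOf, ← map_nsmul, ← map_nsmul, ← map_add]
  simp

theorem chargeOf_one_one (Z : ℤ × ℤ →+ ℂ) : chargeOf Z (1, 1) = Z (1, 1) := rfl

section CentralCharge

variable {Z : ℤ × ℤ →+ ℂ} (hZ10 : Z (1, 0) ∈ UpperH) (hZ01 : Z (0, 1) ∈ UpperH)

include hZ10 hZ01

theorem chargeOf_mem_upperH {d : ℕ × ℕ} (hd : d ≠ (0, 0)) : chargeOf Z d ∈ UpperH := by
  obtain ⟨m, n⟩ := d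
  rw [chargeOf_eq_nsmul_add_nsmul]
  rcases eq_or_ne m 0 with rfl | hm
  · have hn : n ≠ 0 := fun hn => hd (by rw [hn])
    simpa using nsmul_mem_upperH hZ01 hn
  · rcases eq_or_ne n 0 with rfl | hn
    · simpa using nsmul_mem_upperH hZ10 hm
    · exact add_mem_upperH (nsmul_mem_upperH hZ10 hm) (nsmul_mem_upperH hZ01 hn)

variable (hph : phase (Z (0, 1)) < phase (Z (1, 0)))

include hph

theorem phase_chargeOf_lt_iff {d e : ℕ × ℕ} (hd : d ≠ (0, 0)) (he : e ≠ (0, 0)) :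
    phase (chargeOf Z d) < phase (chargeOf Z e) ↔ d.1 * e.2 < e.1 * d.2 := by
  have hpos := (phase_lt_phase_iff hZ01 hZ10).1 hph
  have hdet : (conj (chargeOf Z d) * chargeOf Z e).im =
      (conj (Z (0, 1)) * Z (1, 0)).im * ((e.1 * d.2 : ℕ) - (d.1 * e.2 : ℕ) : ℝ) := by
    simp only [chargeOf_eq_nsmul_add_nsmul, nsmul_eq_mul, Complex.mul_im, Complex.mul_re,
      Complex.add_re, Complex.add_im, Complex.conj_re, Complex.conj_im, Complex.natCast_re,
      Complex.natCast_im]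
    push_cast
    ring
  rw [phase_lt_phase_iff (chargeOf_mem_upperH hZ10 hZ01 hd) (chargeOf_mem_upperH hZ10 hZ01 he),
    hdet, mul_pos_iff_of_pos_left hpos, sub_pos, Nat.cast_lt]

theorem phase_chargeOf_lt_phase_one_one_iff {d : ℕ × ℕ} (hd : d ≠ (0, 0)) :
    phase (chargeOf Z d) < phase (Z (1, 1)) ↔ d.1 < d.2 := by
  rw [← chargeOf_one_one, phase_chargeOf_lt_iff hZ10 hZ01 hph hd (by simp), mul_one, one_mul]

theorem phase_one_one_lt_phase_chargeOf_iff {d : ℕ × ℕ} (hd : d ≠ (0, 0)) :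
    phase (Z (1, 1)) < phase (chargeOf Z d) ↔ d.2 < d.1 := by
  rw [← chargeOf_one_one, phase_chargeOf_lt_iff hZ10 hZ01 hph (by simp) hd, mul_one, one_mul]

theorem phase_chargeOf_eq_phase_one_one_iff {d : ℕ × ℕ} (hd : d ≠ (0, 0)) :
    phase (chargeOf Z d) = phase (Z (1, 1)) ↔ d.1 = d.2 := by
  rw [eq_iff_le_not_lt, ← not_lt, phase_one_one_lt_phase_chargeOf_iff hZ10 hZ01 hph hd,
    phase_chargeOf_lt_phase_one_one_iff hZ10 hZ01 hph hd, not_lt, ← eq_iff_le_not_lt]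

end CentralCharge

/-! ## Morphisms and Schur's lemma -/

namespace BarbellRep

theorem Sub.dimVec_ne_zero {M : BarbellRep} {L : M.Sub} (hL : L.Nonzero) :
    L.dimVec ≠ (0, 0) := by
  rw [Sub.dimVec, Ne, Prod.mk.injEq, Submodule.finrank_eq_zero, Submodule.finrank_eq_zero,
    not_and_or]
  exact hL

theorem Sub.dimVec_eq_of_not_proper {M : BarbellRep} {L : M.Sub} (hL : ¬ L.Proper) :
    L.dimVec = M.dimVec := by
  obtain ⟨hL₁, hL₂⟩ : L.S1 = ⊤ ∧ L.S2 = ⊤ := by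
    simpa only [Sub.Proper, not_or, not_not] using hL
  exact Prod.ext (by rw [Sub.dimVec, hL₁, finrank_top, BarbellRep.dimVec])
    (by rw [Sub.dimVec, hL₂, finrank_top, BarbellRep.dimVec])

end BarbellRep

open BarbellRep

theorem IsStable.phase_sub_le {Z : ℤ × ℤ →+ ℂ} {M : BarbellRep} (hM : IsStable Z M)
    {L : M.Sub} (hL : L.Nonzero) : phase (chargeOf Z L.dimVec) ≤ phase (chargeOf Z M.dimVec) := by
  by_cases hproper : L.Proper
  · exact (hM.2 L hL hproper).le
  · rw [Sub.dimVec_eq_of_not_proper hproper]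

namespace BarbellRep

/-- A morphism of representations: a pair of linear maps commuting with the structure maps. -/
structure Hom (M N : BarbellRep) where
  map1 : M.V1 →ₗ[ℂ] N.V1
  map2 : M.V2 →ₗ[ℂ] N.V2
  map_a : ∀ x, map1 (M.fa x) = N.fa (map1 x)
  map_b : ∀ y, map2 (M.fb y) = N.fb (map2 y)
  map_c : ∀ x, map2 (M.fc x) = N.fc (map1 x)

namespace Hom

variable {M N : BarbellRep} (f : Hom M N)

/-- The kernel of a morphism, as a subrepresentation of its source. -/
def ker : M.Sub where
  S1 := LinearMap.ker f.map1
  S2 := LinearMap.ker f.map2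
  mapsto_a x hx := by rw [LinearMap.mem_ker, f.map_a, LinearMap.mem_ker.1 hx, map_zero]
  mapsto_b y hy := by rw [LinearMap.mem_ker, f.map_b, LinearMap.mem_ker.1 hy, map_zero]
  mapsto_c x hx := by rw [LinearMap.mem_ker, f.map_c, LinearMap.mem_ker.1 hx, map_zero]

/-- The image of a morphism, as a subrepresentation of its target. -/
def range : N.Sub where
  S1 := LinearMap.range f.map1
  S2 := LinearMap.range f.map2
  mapsto_a := by
    rintro _ ⟨x, rfl⟩
    exact ⟨_, f.map_a x⟩
  mapsto_b := by
    rintro _ ⟨y, rfl⟩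
    exact ⟨_, f.map_b y⟩
  mapsto_c := by
    rintro _ ⟨x, rfl⟩
    exact ⟨_, f.map_c x⟩

theorem dimVec_ker_add_dimVec_range : f.ker.dimVec + f.range.dimVec = M.dimVec :=
  Prod.ext ((add_comm _ _).trans f.map1.finrank_range_add_finrank_ker)
    ((add_comm _ _).trans f.map2.finrank_range_add_finrank_ker)

theorem range_nonzero_iff : f.range.Nonzero ↔ f.ker.Proper := by
  simp only [Sub.Nonzero, Sub.Proper, range, ker, Ne, LinearMap.range_eq_bot, LinearMap.ker_eq_top]

theorem not_nonzero_ker_iff :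
    ¬ f.ker.Nonzero ↔ Function.Injective f.map1 ∧ Function.Injective f.map2 := by
  rw [← LinearMap.ker_eq_bot, ← LinearMap.ker_eq_bot, Sub.Nonzero, not_or, not_not, not_not]
  rfl

theorem not_proper_range_iff :
    ¬ f.range.Proper ↔ Function.Surjective f.map1 ∧ Function.Surjective f.map2 := by
  rw [← LinearMap.range_eq_top, ← LinearMap.range_eq_top, Sub.Proper, not_or, not_not, not_not]
  rfl

theorem dimVec_range_of_not_nonzero_ker (hf : ¬ f.ker.Nonzero) : f.range.dimVec = M.dimVec :=
  have hinj := f.not_nonzero_ker_iff.1 hf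
  Prod.ext (LinearMap.finrank_range_of_inj hinj.1) (LinearMap.finrank_range_of_inj hinj.2)

theorem repIso_of_bijective (h₁ : Function.Bijective f.map1) (h₂ : Function.Bijective f.map2) :
    RepIso N M := by
  let e₁ := LinearEquiv.ofBijective f.map1 h₁
  let e₂ := LinearEquiv.ofBijective f.map2 h₂
  refine ⟨e₁.symm, e₂.symm, fun x => ?_, fun y => ?_, fun x => ?_⟩
  · refine e₁.symm_apply_eq.2 (.trans ?_ (f.map_a _).symm)
    exact congrArg N.fa (e₁.apply_symm_apply x).symm
  · refine e₂.symm_apply_eq.2 (.trans ?_ (f.map_b _).symm)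
    exact congrArg N.fb (e₂.apply_symm_apply y).symm
  · refine e₂.symm_apply_eq.2 (.trans ?_ (f.map_c _).symm)
    exact congrArg N.fc (e₁.apply_symm_apply x).symm

/-- Schur's lemma. If the kernel were nonzero, its phase would be smaller than that of `M`, hence
the phase of the image would be larger than that of `N`. -/
theorem repIso_of_isStable {Z : ℤ × ℤ →+ ℂ} (hZ10 : Z (1, 0) ∈ UpperH) (hZ01 : Z (0, 1) ∈ UpperH)
    (hM : IsStable Z M) (hN : IsStable Z N)
    (hphase : phase (chargeOf Z M.dimVec) = phase (chargeOf Z N.dimVec)) (hf : f.ker.Proper) :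
    RepIso N M := by
  have hrange : f.range.Nonzero := f.range_nonzero_iff.2 hf
  have hker : ¬ f.ker.Nonzero := by
    intro hker
    have hlt := hM.2 f.ker hker hf
    rw [← f.dimVec_ker_add_dimVec_range, chargeOf_add, phase_lt_phase_add_iff_phase_add_lt
      (chargeOf_mem_upperH hZ10 hZ01 (Sub.dimVec_ne_zero hker))
      (chargeOf_mem_upperH hZ10 hZ01 (Sub.dimVec_ne_zero hrange)), ← chargeOf_add,
      f.dimVec_ker_add_dimVec_range, hphase] at hlt
    exact (hN.phase_sub_le hrange).not_gt hlt
  have hproper : ¬ f.range.Proper := fun hproper =>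
    (hN.2 f.range hrange hproper).ne (by rw [f.dimVec_range_of_not_nonzero_ker hker, hphase])
  obtain ⟨hinj₁, hinj₂⟩ := f.not_nonzero_ker_iff.1 hker
  obtain ⟨hsurj₁, hsurj₂⟩ := f.not_proper_range_iff.1 hproper
  exact f.repIso_of_bijective ⟨hinj₁, hsurj₁⟩ ⟨hinj₂, hsurj₂⟩

end Hom

end BarbellRep

theorem RepIso.dimVec_eq {M N : BarbellRep} (h : RepIso M N) : M.dimVec = N.dimVec :=
  let ⟨e₁, e₂, _⟩ := h
  Prod.ext e₁.finrank_eq e₂.finrank_eq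

/-! ## The string modules -/

theorem dimVec_Mstring (n : ℕ) : (Mstring n).dimVec = (2 * (n + 1), 2 * (n + 1)) := by
  have h : finrank ℂ ((Fin (n + 1) × Bool) → ℂ) = 2 * (n + 1) := by simp [mul_comm]
  exact Prod.ext h h

theorem dimVec_Mstring_ne_zero (n : ℕ) : (Mstring n).dimVec ≠ (0, 0) := by
  simp [dimVec_Mstring]

theorem strFc_strFa_add_strFa_strFc (n : ℕ) (v : (Fin (n + 1) × Bool) → ℂ) :
    strFc n (strFa n v) + strFa n (strFc n v) = v := by
  funext ⟨k, i⟩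
  cases i <;> simp [strFa, strFc]

theorem strFc_single_zero_false (n : ℕ) : strFc n (Pi.single (0, false) 1) = 0 := by
  funext ⟨k, i⟩
  cases i <;> simp [strFc]

theorem not_bijective_strFc (n : ℕ) : ¬ Function.Bijective (strFc n) := fun h => by
  have h₀ := h.1 ((strFc_single_zero_false n).trans (map_zero (strFc n)).symm)
  simp at h₀

theorem le_of_mapsTo_strFa_strFc {n : ℕ} {S T : Submodule ℂ ((Fin (n + 1) × Bool) → ℂ)}
    (hSa : ∀ v ∈ S, strFa n v ∈ S) (hTa : ∀ v ∈ T, strFa n v ∈ T)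
    (hc : ∀ v ∈ S, strFc n v ∈ T) : S ≤ T := fun v hv => by
  rw [← strFc_strFa_add_strFa_strFc n v]
  exact T.add_mem (hc _ (hSa v hv)) (hTa _ (hc v hv))

theorem eq_smul_single_add_smul_strFa_single (v : (Fin (0 + 1) × Bool) → ℂ) :
    v = v (0, false) • Pi.single (0, false) 1 +
      v (0, true) • strFa 0 (Pi.single (0, false) 1) := by
  funext ⟨k, i⟩
  obtain rfl := Fin.fin_one_eq_zero k
  cases i <;> simp [strFa]

theorem strFc_zero_eq_smul_single (v : (Fin (0 + 1) × Bool) → ℂ) :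
    strFc 0 v = v (0, true) • Pi.single (0, false) 1 := by
  funext ⟨k, i⟩
  obtain rfl := Fin.fin_one_eq_zero k
  cases i <;> simp [strFc]

theorem eq_top_of_mapsTo_strFa_strFc {S : Submodule ℂ ((Fin (0 + 1) × Bool) → ℂ)}
    (ha : ∀ v ∈ S, strFa 0 v ∈ S) (hc : ∀ v ∈ S, strFc 0 v ∈ S) (hS : S ≠ ⊥) : S = ⊤ := by
  suffices hmem : Pi.single (0, false) 1 ∈ S by
    refine S.eq_top_iff'.2 fun w => ?_
    rw [eq_smul_single_add_smul_strFa_single w]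
    exact S.add_mem (S.smul_mem _ hmem) (S.smul_mem _ (ha _ hmem))
  obtain ⟨v, hv, hv₀⟩ := S.exists_mem_ne_zero_of_ne_bot hS
  by_cases htrue : v (0, true) = 0
  · have hv_eq := eq_smul_single_add_smul_strFa_single v
    rw [htrue, zero_smul, add_zero] at hv_eq
    have hfalse : v (0, false) ≠ 0 := fun hfalse => hv₀ (by rw [hv_eq, hfalse, zero_smul])
    exact (S.smul_mem_iff hfalse).1 (hv_eq ▸ hv)
  · exact (S.smul_mem_iff htrue).1 (strFc_zero_eq_smul_single v ▸ hc v hv)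

theorem dimVec_fst_le_snd_of_sub_Mstring {n : ℕ} (L : (Mstring n).Sub) :
    L.dimVec.1 ≤ L.dimVec.2 := by
  obtain ⟨S, T, ha, hb, hc⟩ := L
  change Submodule ℂ ((Fin (n + 1) × Bool) → ℂ) at S T
  exact Submodule.finrank_mono (R := ℂ) (M := (Fin (n + 1) × Bool) → ℂ)
    (le_of_mapsTo_strFa_strFc ha hb hc)

theorem dimVec_fst_lt_snd_of_sub_Mstring_zero {L : (Mstring 0).Sub} (hL : L.Nonzero)
    (hproper : L.Proper) : L.dimVec.1 < L.dimVec.2 := by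
  obtain ⟨S, T, ha, hb, hc⟩ := L
  change Submodule ℂ ((Fin (0 + 1) × Bool) → ℂ) at S T
  have hle : S ≤ T := le_of_mapsTo_strFa_strFc ha hb hc
  have hne : S ≠ T := by
    rintro rfl
    exact (or_self_iff.1 hproper) (eq_top_of_mapsTo_strFa_strFc ha hc (or_self_iff.1 hL))
  exact Submodule.finrank_lt_finrank_of_lt (K := ℂ) (V := (Fin (0 + 1) × Bool) → ℂ)
    (lt_of_le_of_ne hle hne)

section StringModules

variable {Z : ℤ × ℤ →+ ℂ} (hZ10 : Z (1, 0) ∈ UpperH) (hZ01 : Z (0, 1) ∈ UpperH)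
  (hph : phase (Z (0, 1)) < phase (Z (1, 0)))

include hZ10 hZ01 hph

theorem phase_Mstring (n : ℕ) : phase (chargeOf Z (Mstring n).dimVec) = phase (Z (1, 1)) := by
  rw [phase_chargeOf_eq_phase_one_one_iff hZ10 hZ01 hph (dimVec_Mstring_ne_zero n),
    dimVec_Mstring]

theorem isSemistable_Mstring (n : ℕ) : IsSemistable Z (Mstring n) := by
  refine ⟨dimVec_Mstring_ne_zero n, fun L hL _ => ?_⟩
  rw [phase_Mstring hZ10 hZ01 hph, ← not_lt,
    phase_one_one_lt_phase_chargeOf_iff hZ10 hZ01 hph (Sub.dimVec_ne_zero hL), not_lt]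
  exact dimVec_fst_le_snd_of_sub_Mstring L

theorem isStable_Mstring_zero : IsStable Z (Mstring 0) := by
  refine ⟨dimVec_Mstring_ne_zero 0, fun L hL hproper => ?_⟩
  rw [phase_Mstring hZ10 hZ01 hph,
    phase_chargeOf_lt_phase_one_one_iff hZ10 hZ01 hph (Sub.dimVec_ne_zero hL)]
  exact dimVec_fst_lt_snd_of_sub_Mstring_zero hL hproper

end StringModules

/-! ## Morphisms out of `M(acb)` -/

section OrbitMap

variable {V : Type*} [AddCommGroup V] [Module ℂ V]

/-- The map from the space `⟨z₀, z₁⟩` (or `⟨z₂, z₃⟩`) underlying `M(acb)` at a vertex that sends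
its two basis vectors to `x` and `f x`. -/
def orbitMap (f : V →ₗ[ℂ] V) (x : V) : ((Fin (0 + 1) × Bool) → ℂ) →ₗ[ℂ] V :=
  (LinearMap.proj (0, false)).smulRight x + (LinearMap.proj (0, true)).smulRight (f x)

theorem orbitMap_apply (f : V →ₗ[ℂ] V) (x : V) (v : (Fin (0 + 1) × Bool) → ℂ) :
    orbitMap f x v = v (0, false) • x + v (0, true) • f x := rfl

theorem orbitMap_strFa {f : V →ₗ[ℂ] V} (hf : f ∘ₗ f = 0) (x : V)
    (v : (Fin (0 + 1) × Bool) → ℂ) : orbitMap f x (strFa 0 v) = f (orbitMap f x v) := by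
  have hfx : f (f x) = 0 := LinearMap.congr_fun hf x
  simp [orbitMap_apply, strFa, hfx]

end OrbitMap

namespace BarbellRep

/-- The morphism `M(acb) → M` sending `z₀, z₁, z₂, z₃` to `x, a x, c a x, b c a x`, which exists
as soon as `c x = 0`. -/
def homOfKerFc {M : BarbellRep} {x : M.V1} (hx : M.fc x = 0) : Hom (Mstring 0) M where
  map1 := orbitMap M.fa x
  map2 := orbitMap M.fb (M.fc (M.fa x))
  map_a := orbitMap_strFa M.rel_a x
  map_b := orbitMap_strFa M.rel_b _
  map_c v := by
    change orbitMap _ _ (strFc 0 v) = M.fc (v (0, false) • x + v (0, true) • M.fa x)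
    simp [orbitMap_apply, strFc, hx]

theorem proper_ker_homOfKerFc {M : BarbellRep} {x : M.V1} (hx : M.fc x = 0) (hx₀ : x ≠ 0) :
    (homOfKerFc hx).ker.Proper := by
  refine .inl fun htop => hx₀ ?_
  have hmap : orbitMap M.fa x (Pi.single (0, false) 1) = 0 :=
    LinearMap.congr_fun (LinearMap.ker_eq_top.1 htop) _
  simpa [orbitMap_apply] using hmap

theorem exists_ne_zero_fc_eq_zero {M : BarbellRep} (hdim : finrank ℂ M.V1 = finrank ℂ M.V2)
    (hc : ¬ Function.Bijective M.fc) : ∃ x ≠ 0, M.fc x = 0 := by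
  have hinj : ¬ Function.Injective M.fc := fun hinj =>
    hc ⟨hinj, (LinearMap.injective_iff_surjective_of_finrank_eq_finrank hdim).1 hinj⟩
  rw [injective_iff_map_eq_zero] at hinj
  push Not at hinj
  obtain ⟨x, hx, hx₀⟩ := hinj
  exact ⟨x, hx₀, hx⟩

end BarbellRep

section Classification

variable {Z : ℤ × ℤ →+ ℂ} (hZ10 : Z (1, 0) ∈ UpperH) (hZ01 : Z (0, 1) ∈ UpperH)
  (hph : phase (Z (0, 1)) < phase (Z (1, 0)))

include hZ10 hZ01 hph

theorem IsStable.repIso_Mstring_zero {M : BarbellRep} (hM : IsStable Z M)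
    (hθ : phase (chargeOf Z M.dimVec) = phase (Z (1, 1))) (hc : ¬ Function.Bijective M.fc) :
    RepIso M (Mstring 0) := by
  have hdim := (phase_chargeOf_eq_phase_one_one_iff hZ10 hZ01 hph hM.1).1 hθ
  obtain ⟨x, hx₀, hx⟩ := exists_ne_zero_fc_eq_zero hdim hc
  exact (homOfKerFc hx).repIso_of_isStable hZ10 hZ01 (isStable_Mstring_zero hZ10 hZ01 hph) hM
    ((phase_Mstring hZ10 hZ01 hph 0).trans hθ.symm) (proper_ker_homOfKerFc hx hx₀)

theorem not_isStable_Mstring {n : ℕ} (hn : 1 ≤ n) : ¬ IsStable Z (Mstring n) := by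
  intro hstable
  have hiso := hstable.repIso_Mstring_zero hZ10 hZ01 hph (phase_Mstring hZ10 hZ01 hph n)
    (not_bijective_strFc n)
  have hdim := congrArg Prod.fst hiso.dimVec_eq
  simp only [dimVec_Mstring] at hdim
  lia

end Classification

/-- Fix a central charge `Z : ℤ² → ℂ` (values of the standard basis
vectors in `ℍ`) with `φ(0,1) < φ(1,0)`, and set `θ := φ(1,1) = phase (Z (1,1))`.  Then:
* the string module `M(acb)` (which is `Mstring 0`) is stable;
* every stable representation of phase `θ` whose map `f_c` is not an isomorphism is
  isomorphic to `M(acb)`;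
* for every `n ≥ 1` the string module `M(acb(c⁻¹acb)ⁿ)` is semistable of phase `θ`
  but not stable. -/
theorem barbell_stables_of_phase_theta
    (Z : ℤ × ℤ →+ ℂ)
    (hZ10 : Z (1, 0) ∈ UpperH) (hZ01 : Z (0, 1) ∈ UpperH)
    (hph : phase (Z (0, 1)) < phase (Z (1, 0))) :
    IsStable Z (Mstring 0) ∧
    (∀ M : BarbellRep, IsStable Z M →
      phase (chargeOf Z M.dimVec) = phase (Z (1, 1)) →
      ¬ Function.Bijective M.fc → RepIso M (Mstring 0)) ∧
    (∀ n : ℕ, 1 ≤ n →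
      IsSemistable Z (Mstring n) ∧
      phase (chargeOf Z (Mstring n).dimVec) = phase (Z (1, 1)) ∧
      ¬ IsStable Z (Mstring n)) :=
  ⟨isStable_Mstring_zero hZ10 hZ01 hph,
    fun _ hM hθ hc => hM.repIso_Mstring_zero hZ10 hZ01 hph hθ hc,
    fun n hn => ⟨isSemistable_Mstring hZ10 hZ01 hph n, phase_Mstring hZ10 hZ01 hph n,
      not_isStable_Mstring hZ10 hZ01 hph hn⟩⟩
end
end

section
/- In the quantum torus 𝕋, the partial products P_N := E(t^{(1,0)})² · E(t^{(2,1)})² ⋯ E(t^{(N,N−1)})² · E(t^{(1,1)})⁴ · E(−q^{1/2} t^{(2,2)})⁻¹ · E(−q^{−1/2} t^{(2,2)})⁻¹ · E(t^{(N−1,N)})² ⋯ E(t^{(1,2)})² · E(t^{(0,1)})² (the first product taken over d = 1, …, N in increasing order of d from left to right, and the last over d = N, …, 1 in decreasing order of d from left to right) converge coefficientwise as N → ∞, and their limit equals E(t^{(0,1)})² · E(t^{(1,0)})². -/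
/-!
# Statement 13

Let `ℛ` be the subring of `ℚ(q^{1/2})` generated by `q^{1/2}`, `q^{-1/2}` and `(1-qⁿ)⁻¹`
for all `n ≥ 1`.  Let `𝕋` be the `ℛ`-module of all functions `ℕ² → ℛ`, an element `f`
being written `Σ_d f(d)·t^d`, with the multiplication determined by
`t^d·t^{d'} = q^{(d₂d'₁ - d₁d'₂)/2}·t^{d+d'}` — the quantum torus attached to the Euler
form of the barbell quiver.  For `λ ∈ ℛ` and nonzero `d ∈ ℕ²` the quantum dilogarithm is
`E(λ·t^d) := Σ_{k ≥ 0} (-1)^k q^{k/2} λ^k t^{kd} / ((1-q)(1-q²)⋯(1-q^k)) ∈ 𝕋`; it has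
constant coefficient `1` and is invertible in `𝕋`.

The statement: the partial products
`P_N := E(t^{(1,0)})² · E(t^{(2,1)})² ⋯ E(t^{(N,N-1)})² · E(t^{(1,1)})⁴ ·
E(-q^{1/2}t^{(2,2)})⁻¹ · E(-q^{-1/2}t^{(2,2)})⁻¹ · E(t^{(N-1,N)})² ⋯ E(t^{(1,2)})² ·
E(t^{(0,1)})²`
converge coefficientwise as `N → ∞` (for every `d ∈ ℕ²` the coefficient `P_N(d)` is
eventually constant) and their limit equals `E(t^{(0,1)})² · E(t^{(1,0)})²`.

The two inverse factors are encoded by elements `U, V` hypothesised to be the (two-sided,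
hence unique) inverses of `E(-q^{1/2}t^{(2,2)})` and `E(-q^{-1/2}t^{(2,2)})` in `𝕋`.
-/

noncomputable section

/-- The field `ℚ(q^{1/2})`, realised as the field of rational functions over `ℚ` in the
variable `qh := q^{1/2}` (so that `q = qh²`). -/
abbrev FF := RatFunc ℚ

/-- The variable `q^{1/2}`. -/
def qh : FF := RatFunc.X

/-- The generating set `{q^{1/2}, q^{-1/2}} ∪ {(1 - qⁿ)⁻¹ : n ≥ 1}`. -/
def genSet : Set FF := {qh, qh⁻¹} ∪ {y | ∃ n : ℕ, 1 ≤ n ∧ y = (1 - qh ^ (2 * n))⁻¹}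

/-- The subring `ℛ` of `ℚ(q^{1/2})` generated by `q^{1/2}`, `q^{-1/2}` and the `(1-qⁿ)⁻¹`. -/
def Rcal : Subring FF := Subring.closure genSet

/-- `q^{1/2}` as an element of `ℛ`. -/
def qhR : Rcal := ⟨qh, Subring.subset_closure (by left; left; rfl)⟩

/-- `q^{-1/2}` as an element of `ℛ`. -/
def qhinvR : Rcal := ⟨qh⁻¹, Subring.subset_closure (by left; right; rfl)⟩

/-- `(1 - q^{n+1})⁻¹` as an element of `ℛ`. -/
def dinvR (n : ℕ) : Rcal :=
  ⟨(1 - qh ^ (2 * (n + 1)))⁻¹, Subring.subset_closure (Or.inr ⟨n + 1, by omega, rfl⟩)⟩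

/-- The quantum torus `𝕋`: all functions `ℕ² → ℛ`, an element `f` being thought of as the
formal sum `Σ_d f(d)·t^d`. -/
abbrev T13 := (ℕ × ℕ) → Rcal

/-- The twist `t^u · t^v = tw u v · t^(u+v)`, where
`tw u v = q^{(u₂v₁ - u₁v₂)/2} = (q^{1/2})^{u₂v₁} · (q^{-1/2})^{u₁v₂}`. -/
def tw (u v : ℕ × ℕ) : Rcal := qhR ^ (u.2 * v.1) * qhinvR ^ (u.1 * v.2)

/-- The unit `1 = t^0` of `𝕋`. -/
def oneT : T13 := fun d => if d = (0, 0) then 1 else 0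

/-- Multiplication on `𝕋`: the coefficient of `t^d` in `f·g` is the finite sum
`Σ_{d' + d'' = d} tw d' d'' · f(d') · g(d'')` (the pairs `(d', d'')` with `d' + d'' = d`
being parametrised by `d'` in the box `[0, d₁] × [0, d₂]`). -/
def mulT (f g : T13) : T13 := fun d =>
  ∑ x ∈ Finset.range (d.1 + 1) ×ˢ Finset.range (d.2 + 1),
    tw (x.1, x.2) (d.1 - x.1, d.2 - x.2) * f (x.1, x.2) * g (d.1 - x.1, d.2 - x.2)

/-- Product of a finite list of elements of `𝕋` (from left to right). -/
def prodT (l : List T13) : T13 := l.foldr mulT oneT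

/-- `k`-th power in `𝕋`. -/
def powT (f : T13) (k : ℕ) : T13 := prodT (List.replicate k f)

/-- The `k`-th coefficient `(-1)^k q^{k/2} λ^k / ((1-q)(1-q²)⋯(1-q^k))` of the quantum
dilogarithm `E(λ·t^d)`. -/
def Ecoeff (lam : Rcal) (k : ℕ) : Rcal :=
  (-1) ^ k * qhR ^ k * lam ^ k * ∏ i ∈ Finset.range k, dinvR i

/-- For `d ≠ 0`, the multiplicity `k` with `e = k·d`, if `e` is a multiple of `d`. -/
def kOf (d e : ℕ × ℕ) : ℕ := if d.1 = 0 then e.2 / d.2 else e.1 / d.1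

/-- The quantum dilogarithm
`E(λ·t^d) = Σ_{k ≥ 0} (-1)^k q^{k/2} λ^k t^{kd} / ((1-q)(1-q²)⋯(1-q^k)) ∈ 𝕋`
(for `d ≠ 0`): its coefficient at `e = k·d` is `Ecoeff lam k`, and all other coefficients
vanish. -/
def Edlog (lam : Rcal) (d : ℕ × ℕ) : T13 := fun e =>
  if e = (kOf d e * d.1, kOf d e * d.2) then Ecoeff lam (kOf d e) else 0

/-- `E(t^d)²`. -/
def Esq (d : ℕ × ℕ) : T13 := powT (Edlog 1 d) 2

/-- The partial product
`P_N = E(t^{(1,0)})² ⋯ E(t^{(N,N-1)})² · E(t^{(1,1)})⁴ · E(-q^{1/2}t^{(2,2)})⁻¹ ·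
E(-q^{-1/2}t^{(2,2)})⁻¹ · E(t^{(N-1,N)})² ⋯ E(t^{(0,1)})²`,
where `U` and `V` denote the two inverse factors. -/
def Ppartial (U V : T13) (N : ℕ) : T13 :=
  prodT (((List.range N).map fun i => Esq (i + 1, i)) ++
    ([powT (Edlog 1 (1, 1)) 4, U, V] ++
      ((List.range N).reverse.map fun i => Esq (i, i + 1))))

/-!
For `det(d, e) = 1` the pentagon identity `E(tᵈ) E(tᵈ⁺ᵉ) E(tᵉ) = E(tᵉ) E(tᵈ)` holds. Put
`c = E(t^{(1, 1)})`, `X i = E(t^{(i + 1, i)})` and `Y i = E(t^{(i, i + 1)})`. Moving factors past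
each other with the pentagon gives `(Y 0)² (X 0)² = X 0 · c² · (Y 1 · X 0) · c² · Y 1 · (Y 0)²`.
The exponents `(1, 0)` and `(1, 2)` of the inner product `Y 1 · X 0` have determinant `2`, so it
factors as for a Kronecker quiver: `Y 1 · X 0 = X 0 · X 2 · X 4 ⋯ W ⋯ Y 5 · Y 3 · Y 1`, where
`W = E(-q^{1/2} t^{(2, 2)})⁻¹ E(-q^{-1/2} t^{(2, 2)})⁻¹` commutes with `c`. The pentagon
`c · X i = X i · X (i + 1) · c` now moves the left `c²` inwards to `W`, completing
`X 0 · X 0 · X 2 · X 4 ⋯` to `(X 0)² (X 1)² (X 2)² ⋯`, and symmetrically on the right.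

The Kronecker factorisation comes from a closed form `F(d, e)` of the half-infinite product
`E(tᵈ) E(tᵈ⁺ᵉ) E(tᵈ⁺²ᵉ) ⋯ E(-s tᵉ)⁻¹`, where `s²` is the twist of the pair: the recursion
`E(tᵈ) F(d + e, e) = F(d, e)` and the pentagon are both instances of the `q`-Vandermonde identity
on coefficients. Infinite products are handled modulo the `tᵘ` with `u ≰ w`, where all but finitely
many factors become `1`.
-/

namespace QuantumDilogarithm

open Finset hiding antidiagonal mem_antidiagonal
open Finset.HasAntidiagonal (antidiagonal mem_antidiagonal)
open PowerSeries

section DilogSeries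

variable {K : Type*} [Field K] {s : Kˣ}

/-- The coefficient `(-s)ᵏ / ((1 - q) ⋯ (1 - qᵏ))` of the quantum dilogarithm, where `q = s²`. -/
def dilogCoeff (s : Kˣ) (k : ℕ) : K :=
  ∏ i ∈ range k, -(s : K) / (1 - (s : K) ^ (2 * (i + 1)))

/-- The quantum dilogarithm `∑ₖ (-s x)ᵏ / ((1 - q) ⋯ (1 - qᵏ))`, `q = s²`, as a power series. -/
def dilog (s : Kˣ) : K⟦X⟧ :=
  PowerSeries.mk (dilogCoeff s)

@[simp]
theorem coeff_dilog (s : Kˣ) (k : ℕ) : coeff k (dilog s) = dilogCoeff s k :=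
  coeff_mk _ _

@[simp]
theorem dilogCoeff_zero (s : Kˣ) : dilogCoeff s 0 = 1 :=
  prod_range_zero _

@[simp]
theorem constantCoeff_dilog (s : Kˣ) : constantCoeff (dilog s) = 1 := by
  rw [← coeff_zero_eq_constantCoeff_apply, coeff_dilog, dilogCoeff_zero]

theorem one_sub_pow_ne_zero (hs : ¬IsOfFinOrder s) {n : ℕ} (hn : 0 < n) :
    1 - (s : K) ^ n ≠ 0 := by
  refine sub_ne_zero.2 fun h ↦ hs (isOfFinOrder_iff_pow_eq_one.2 ⟨n, hn, ?_⟩)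
  exact Units.ext (by rw [Units.val_pow_eq_pow_val, ← h, Units.val_one])

theorem one_sub_pow_mul_dilogCoeff_succ (hs : ¬IsOfFinOrder s) (k : ℕ) :
    (1 - (s : K) ^ (2 * (k + 1))) * dilogCoeff s (k + 1) = -s * dilogCoeff s k := by
  have := one_sub_pow_ne_zero hs (n := 2 * (k + 1)) (by positivity)
  rw [dilogCoeff, prod_range_succ, ← dilogCoeff]
  field_simp

theorem one_sub_pow_mul_dilogCoeff_inv_succ (hs : ¬IsOfFinOrder s) (k : ℕ) :
    (1 - (s : K) ^ (2 * (k + 1))) * dilogCoeff s⁻¹ (k + 1) =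
      (s : K) ^ (2 * k + 1) * dilogCoeff s⁻¹ k := by
  have h := one_sub_pow_mul_dilogCoeff_succ (isOfFinOrder_inv_iff.not.2 hs) k
  have hinv : (s : K) ^ (2 * (k + 1)) * ((s⁻¹ : Kˣ) : K) ^ (2 * (k + 1)) = 1 := by
    rw [← mul_pow, Units.mul_inv, one_pow]
  linear_combination (-(s : K) ^ (2 * (k + 1))) * h - dilogCoeff s⁻¹ (k + 1) * hinv +
    (s : K) ^ (2 * k + 1) * dilogCoeff s⁻¹ k * s.mul_inv

theorem neg_pow_mul_dilogCoeff_inv (hs : ¬IsOfFinOrder s) (k : ℕ) :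
    (-(s : K)) ^ k * dilogCoeff s⁻¹ k = (s : K) ^ (k ^ 2) * dilogCoeff s k := by
  induction k with
  | zero => simp
  | succ k ih =>
    refine mul_left_cancel₀ (one_sub_pow_ne_zero hs (n := 2 * (k + 1)) (by positivity)) ?_
    linear_combination (-(s : K)) ^ (k + 1) * one_sub_pow_mul_dilogCoeff_inv_succ hs k -
      (s : K) ^ ((k + 1) ^ 2) * one_sub_pow_mul_dilogCoeff_succ hs k -
      (s : K) ^ (2 * k + 2) * ih

@[simp]
theorem constantCoeff_rescale (a : K) (f : K⟦X⟧) :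
    constantCoeff (rescale a f) = constantCoeff f := by
  rw [← coeff_zero_eq_constantCoeff_apply, coeff_rescale, pow_zero, one_mul,
    coeff_zero_eq_constantCoeff_apply]

theorem eq_one_add_C_mul_X_mul {a : K} {f g : K⟦X⟧}
    (h₀ : constantCoeff f = constantCoeff g)
    (h : ∀ k, coeff (k + 1) f = coeff (k + 1) g + a * coeff k g) : f = (1 + C a * X) * g := by
  ext (_ | k)
  · simpa [add_mul, mul_assoc] using h₀
  · rw [add_mul, one_mul, map_add, mul_assoc, coeff_C_mul, coeff_succ_X_mul, h]

theorem rescale_pow_dilog (hs : ¬IsOfFinOrder s) (n : ℕ) :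
    rescale ((s : K) ^ (2 * n)) (dilog s) =
      (∏ i ∈ range n, (1 + C ((s : K) ^ (2 * i + 1)) * X)) * dilog s := by
  induction n with
  | zero => simp
  | succ n ih =>
    rw [prod_range_succ_comm, mul_assoc, ← ih]
    refine eq_one_add_C_mul_X_mul (by simp) fun k ↦ ?_
    simp only [coeff_rescale, coeff_dilog]
    linear_combination -(s : K) ^ (2 * n * (k + 1)) * one_sub_pow_mul_dilogCoeff_succ hs k

theorem eq_C_of_rescale_eq_self {a : K} (ha : ¬IsOfFinOrder a) {f : K⟦X⟧}
    (hf : rescale a f = f) : f = C (constantCoeff f) := by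
  ext k
  obtain rfl | hk := Nat.eq_zero_or_pos k
  · simp
  · have hak : a ^ k ≠ 1 := fun h ↦ ha (isOfFinOrder_iff_pow_eq_one.2 ⟨k, hk, h⟩)
    have hfk : a ^ k * coeff k f = coeff k f := by rw [← coeff_rescale, hf]
    rw [coeff_C, if_neg hk.ne']
    exact (mul_left_eq_self₀.1 hfk).resolve_left hak

theorem dilog_mul_dilog_inv (hs : ¬IsOfFinOrder s) : dilog s * dilog s⁻¹ = 1 := by
  have hq : ¬IsOfFinOrder ((s : K) ^ 2) := fun h ↦
    hs (Units.isOfFinOrder_val.1 (h.of_pow two_ne_zero))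
  have hD : rescale ((s : K) ^ 2) (dilog s) = (1 + C (s : K) * X) * dilog s := by
    simpa using rescale_pow_dilog hs 1
  have hD' : dilog s⁻¹ = (1 + C (s : K) * X) * rescale ((s : K) ^ 2) (dilog s⁻¹) := by
    refine eq_one_add_C_mul_X_mul (by simp) fun k ↦ ?_
    simp only [coeff_rescale, coeff_dilog]
    linear_combination one_sub_pow_mul_dilogCoeff_inv_succ hs k
  have h : rescale ((s : K) ^ 2) (dilog s * dilog s⁻¹) = dilog s * dilog s⁻¹ := by
    rw [map_mul, hD, mul_right_comm, mul_comm, ← hD', mul_comm]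
  rw [eq_C_of_rescale_eq_self hq h]
  simp

/-- The sum side of the finite `q`-binomial theorem, multiplied by `dilogCoeff s n` so that the
Gaussian binomials become products of dilogarithm coefficients. -/
def qBinomialSum (s : Kˣ) (n : ℕ) : K⟦X⟧ :=
  ∑ p ∈ antidiagonal n, C ((s : K) ^ (p.2 ^ 2) * dilogCoeff s p.1 * dilogCoeff s p.2) * X ^ p.2

theorem C_one_sub_pow_mul_qBinomialSum_succ (hs : ¬IsOfFinOrder s) (n : ℕ) :
    C (1 - (s : K) ^ (2 * (n + 1))) * qBinomialSum s (n + 1) =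
      C (-(s : K)) * (1 + C ((s : K) ^ (2 * n + 1)) * X) * qBinomialSum s n := by
  set F : ℕ × ℕ → K⟦X⟧ := fun p ↦
    C ((s : K) ^ (p.2 ^ 2) * dilogCoeff s p.1 * dilogCoeff s p.2) * X ^ p.2
  have hsplit : ∀ p ∈ antidiagonal (n + 1), C (1 - (s : K) ^ (2 * (n + 1))) * F p =
      C (1 - (s : K) ^ (2 * p.1)) * F p +
        C ((s : K) ^ (2 * p.1) * (1 - (s : K) ^ (2 * p.2))) * F p := fun p hp ↦ by
    rw [← mem_antidiagonal.1 hp, ← add_mul, ← map_add]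
    ring_nf
  have hfst : ∑ p ∈ antidiagonal (n + 1), C (1 - (s : K) ^ (2 * p.1)) * F p =
      C (-(s : K)) * ∑ p ∈ antidiagonal n, F p := by
    rw [Nat.sum_antidiagonal_succ, mul_sum]
    simp only [mul_zero, pow_zero, sub_self, map_zero, zero_mul, zero_add]
    refine sum_congr rfl fun p _ ↦ ?_
    simp only [F, ← mul_assoc, ← map_mul]
    congr 2
    linear_combination
      (s : K) ^ (p.2 ^ 2) * dilogCoeff s p.2 * one_sub_pow_mul_dilogCoeff_succ hs p.1
  have hsnd : ∑ p ∈ antidiagonal (n + 1),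
        C ((s : K) ^ (2 * p.1) * (1 - (s : K) ^ (2 * p.2))) * F p =
      C (-(s : K)) * (C ((s : K) ^ (2 * n + 1)) * X) * ∑ p ∈ antidiagonal n, F p := by
    rw [Nat.sum_antidiagonal_succ', mul_sum]
    simp only [mul_zero, pow_zero, sub_self, map_zero, zero_mul, zero_add]
    refine sum_congr rfl fun p hp ↦ ?_
    rw [← mem_antidiagonal.1 hp, mul_assoc, mul_assoc (C _) X, mul_left_comm X, ← pow_succ']
    simp only [F, ← mul_assoc, ← map_mul]
    congr 2
    linear_combination (s : K) ^ ((p.2 + 1) ^ 2 + 2 * p.1) * dilogCoeff s p.1 *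
      one_sub_pow_mul_dilogCoeff_succ hs p.2
  rw [qBinomialSum, qBinomialSum, mul_sum, sum_congr rfl hsplit, sum_add_distrib, hfst, hsnd]
  ring

theorem qBinomialSum_eq_prod (hs : ¬IsOfFinOrder s) (n : ℕ) :
    qBinomialSum s n =
      C (dilogCoeff s n) * ∏ i ∈ range n, (1 + C ((s : K) ^ (2 * i + 1)) * X) := by
  induction n with
  | zero => simp [qBinomialSum]
  | succ n ih =>
    have hq : C (1 - (s : K) ^ (2 * (n + 1))) ≠ 0 :=
      (map_ne_zero_iff C C_injective).2 (one_sub_pow_ne_zero hs (by positivity))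
    refine mul_left_cancel₀ hq ?_
    rw [C_one_sub_pow_mul_qBinomialSum_succ hs, ih, ← mul_assoc (C (1 - _)), ← map_mul,
      one_sub_pow_mul_dilogCoeff_succ hs, map_mul, prod_range_succ]
    ring

/-- The `q`-Vandermonde form of the finite `q`-binomial theorem. -/
theorem sum_antidiagonal_dilogCoeff (hs : ¬IsOfFinOrder s) (n j : ℕ) :
    ∑ p ∈ antidiagonal n, (s : K) ^ (p.2 ^ 2) * dilogCoeff s p.1 * dilogCoeff s p.2 *
        (if p.2 ≤ j then dilogCoeff s (j - p.2) else 0) =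
      (s : K) ^ (2 * n * j) * (dilogCoeff s n * dilogCoeff s j) := by
  have h := congr(coeff j ($(qBinomialSum_eq_prod hs n) * dilog s))
  rw [qBinomialSum, mul_assoc, ← rescale_pow_dilog hs, sum_mul, map_sum, coeff_C_mul, coeff_rescale,
    coeff_dilog, ← pow_mul, mul_left_comm] at h
  simpa only [mul_assoc, coeff_C_mul, coeff_X_pow_mul', coeff_dilog] using h

end DilogSeries

/-- The completed quantum torus attached to a bicharacter `χ`: an element `f` is the formal sum
`∑ f.coeff(d) tᵈ`, and the product is determined by `tᵈ tᵉ = χ(d, e) tᵈ⁺ᵉ`. -/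
@[ext]
structure QuantumTorus {Γ K : Type*} [AddMonoid Γ] [CommMonoid K]
    (χ : AddChar Γ (AddChar Γ K)) where
  coeff : Γ → K

namespace QuantumTorus

section Monoid

variable {Γ K : Type*} [AddCommMonoid Γ] [CommSemiring K] {χ : AddChar Γ (AddChar Γ K)}

instance [DecidableEq Γ] : One (QuantumTorus χ) :=
  ⟨⟨Pi.single 0 1⟩⟩

protected theorem coeff_one [DecidableEq Γ] (d : Γ) :
    (1 : QuantumTorus χ).coeff d = if d = 0 then 1 else 0 :=
  Pi.single_apply 0 1 d

variable [HasAntidiagonal Γ]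

instance : Mul (QuantumTorus χ) :=
  ⟨fun f g ↦ ⟨fun d ↦ ∑ p ∈ antidiagonal d, χ p.1 p.2 * f.coeff p.1 * g.coeff p.2⟩⟩

protected theorem coeff_mul (f g : QuantumTorus χ) (d : Γ) :
    (f * g).coeff d = ∑ p ∈ antidiagonal d, χ p.1 p.2 * f.coeff p.1 * g.coeff p.2 :=
  rfl

instance : Semigroup (QuantumTorus χ) where
  mul_assoc f g h := by
    ext d
    simp only [QuantumTorus.coeff_mul, mul_sum, sum_mul]
    rw [sum_sigma', sum_sigma']
    refine sum_nbij' (fun x ↦ ⟨(x.2.1, x.2.2 + x.1.2), (x.2.2, x.1.2)⟩)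
      (fun x ↦ ⟨(x.1.1 + x.2.1, x.2.2), (x.1.1, x.2.1)⟩) ?_ ?_ ?_ ?_ ?_
    all_goals
      rintro ⟨⟨a, b⟩, c, d⟩ h
      simp only [mem_sigma, mem_antidiagonal] at h
      obtain ⟨rfl, rfl⟩ := h
    · simp [add_assoc]
    · simp [add_assoc]
    · rfl
    · rfl
    · simp only [AddChar.map_add_eq_mul, AddChar.mul_apply]
      ring

instance [DecidableEq Γ] : Monoid (QuantumTorus χ) where
  one_mul f := by
    ext d
    rw [QuantumTorus.coeff_mul, sum_eq_single_of_mem (0, d) (by simp)]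
    · simp [QuantumTorus.coeff_one]
    · rintro ⟨u, v⟩ h hne
      have hu : u ≠ 0 := by
        rintro rfl
        exact hne (by rw [← mem_antidiagonal.1 h, zero_add])
      simp [QuantumTorus.coeff_one, hu]
  mul_one f := by
    ext d
    rw [QuantumTorus.coeff_mul, sum_eq_single_of_mem (d, 0) (by simp)]
    · simp [QuantumTorus.coeff_one]
    · rintro ⟨u, v⟩ h hne
      have hv : v ≠ 0 := by
        rintro rfl
        exact hne (by rw [← mem_antidiagonal.1 h, add_zero])
      simp [QuantumTorus.coeff_one, hv]

end Monoid

section Map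

variable {Γ Γ' Γ'' K : Type*} [AddCommMonoid Γ] [AddCommMonoid Γ'] [AddCommMonoid Γ'']
  [CommSemiring K] {χ : AddChar Γ (AddChar Γ K)} {χ' : AddChar Γ' (AddChar Γ' K)}
  {χ'' : AddChar Γ'' (AddChar Γ'' K)} {δ : Γ →+ Γ'} {δ' : Γ' →+ Γ''}

/-- An embedding of lattices compatible with the given bicharacters; it induces a morphism of
quantum tori. -/
structure IsIsometry (χ : AddChar Γ (AddChar Γ K)) (χ' : AddChar Γ' (AddChar Γ' K))
    (δ : Γ →+ Γ') : Prop where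
  injective : Function.Injective δ
  map_char : ∀ u v, χ' (δ u) (δ v) = χ u v

theorem IsIsometry.comp (h' : IsIsometry χ' χ'' δ') (h : IsIsometry χ χ' δ) :
    IsIsometry χ χ'' (δ'.comp δ) :=
  ⟨h'.injective.comp h.injective, fun u v ↦ (h'.map_char _ _).trans (h.map_char u v)⟩

/-- The substitution `tᵈ ↦ t^δ(d)`, where `δ` should be injective. -/
def pushforward (δ : Γ →+ Γ') (f : QuantumTorus χ) : QuantumTorus χ' :=
  ⟨Function.extend δ f.coeff 0⟩

theorem coeff_pushforward (hδ : Function.Injective δ) (f : QuantumTorus χ) (u : Γ) :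
    (pushforward δ f : QuantumTorus χ').coeff (δ u) = f.coeff u :=
  hδ.extend_apply _ _ _

theorem coeff_pushforward_of_notMem_range (f : QuantumTorus χ) {w : Γ'} (hw : w ∉ Set.range δ) :
    (pushforward δ f : QuantumTorus χ').coeff w = 0 :=
  Function.extend_apply' _ _ _ hw

theorem eq_pushforward_iff (hδ : Function.Injective δ) {f : QuantumTorus χ} {g : QuantumTorus χ'} :
    g = pushforward δ f ↔
      (∀ u, g.coeff (δ u) = f.coeff u) ∧ ∀ w ∉ Set.range δ, g.coeff w = 0 := by
  refine ⟨?_, fun ⟨h, h'⟩ ↦ QuantumTorus.ext (funext fun w ↦ ?_)⟩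
  · rintro rfl
    exact ⟨coeff_pushforward hδ f, fun w ↦ coeff_pushforward_of_notMem_range f⟩
  · by_cases hw : w ∈ Set.range δ
    · obtain ⟨u, rfl⟩ := hw
      rw [h, coeff_pushforward hδ]
    · rw [h' w hw, coeff_pushforward_of_notMem_range f hw]

theorem pushforward_pushforward (hδ' : Function.Injective δ') (hδ : Function.Injective δ)
    (f : QuantumTorus χ) :
    pushforward δ' (pushforward δ f : QuantumTorus χ') =
      (pushforward (δ'.comp δ) f : QuantumTorus χ'') := by
  have hinj : Function.Injective (δ'.comp δ) := hδ'.comp hδ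
  refine (eq_pushforward_iff hinj).2 ⟨fun u ↦ ?_, fun w hw ↦ ?_⟩
  · rw [AddMonoidHom.comp_apply, coeff_pushforward hδ', coeff_pushforward hδ]
  · by_cases hw' : w ∈ Set.range δ'
    · obtain ⟨v, rfl⟩ := hw'
      rw [coeff_pushforward hδ']
      refine coeff_pushforward_of_notMem_range f ?_
      rintro ⟨u, rfl⟩
      exact hw ⟨u, rfl⟩
    · exact coeff_pushforward_of_notMem_range _ hw'

theorem pushforward_one [DecidableEq Γ] [DecidableEq Γ'] (hδ : Function.Injective δ) :
    pushforward δ (1 : QuantumTorus χ) = (1 : QuantumTorus χ') := by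
  refine ((eq_pushforward_iff hδ).2 ⟨fun u ↦ ?_, fun w hw ↦ ?_⟩).symm
  · simp only [QuantumTorus.coeff_one, map_eq_zero_iff δ hδ]
  · rw [QuantumTorus.coeff_one, if_neg]
    rintro rfl
    exact hw ⟨0, map_zero δ⟩

variable [HasAntidiagonal Γ] [HasAntidiagonal Γ']

theorem pushforward_mul (h : IsIsometry χ χ' δ) (f g : QuantumTorus χ) :
    pushforward δ (f * g) = (pushforward δ f * pushforward δ g : QuantumTorus χ') := by
  have hzero : ∀ p : Γ' × Γ', p ∉ Set.range (Prod.map δ δ) →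
      χ' p.1 p.2 * (pushforward δ f : QuantumTorus χ').coeff p.1 *
        (pushforward δ g : QuantumTorus χ').coeff p.2 = 0 := by
    rintro ⟨a, b⟩ hp
    rw [Set.range_prodMap, Set.mem_prod, not_and_or] at hp
    rcases hp with ha | hb
    · simp [coeff_pushforward_of_notMem_range f ha]
    · simp [coeff_pushforward_of_notMem_range g hb]
  refine ((eq_pushforward_iff h.injective).2 ⟨fun u ↦ ?_, fun w hw ↦ ?_⟩).symm
  · refine (sum_of_injOn (Prod.map δ δ) (h.injective.prodMap h.injective).injOn ?_ ?_ ?_).symm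
    · intro p hp
      rw [mem_coe, mem_antidiagonal] at hp ⊢
      rw [Prod.map_fst, Prod.map_snd, ← map_add, hp]
    · rintro p hp hpu
      refine hzero p ?_
      rintro ⟨v, rfl⟩
      refine hpu ⟨v, ?_, rfl⟩
      simpa [← map_add, h.injective.eq_iff] using hp
    · rintro p -
      simp only [Prod.map_fst, Prod.map_snd, h.map_char, coeff_pushforward h.injective]
  · refine sum_eq_zero fun p hp ↦ hzero p ?_
    rintro ⟨v, rfl⟩
    exact hw ⟨v.1 + v.2, by simpa using hp⟩

end Map

end QuantumTorus

open QuantumTorus hiding coeff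

instance : HasAntidiagonal (ℕ × ℕ) :=
  HasAntidiagonal.antidiagonalOfLocallyFinite

section Lattice

variable {K : Type*} [Field K] {r r' : Kˣ} {d e : ℕ × ℕ}

/-- The bicharacter `(u, v) ↦ r ^ (u₂v₁ - u₁v₂)` of the barbell quiver. -/
def euler (r : Kˣ) : AddChar (ℕ × ℕ) (AddChar (ℕ × ℕ) K) where
  toFun u :=
    { toFun v := (r : K) ^ ((u.2 * v.1 : ℤ) - u.1 * v.2)
      map_zero_eq_one' := by simp
      map_add_eq_mul' v w := by
        rw [← zpow_add₀ r.ne_zero]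
        push_cast [Prod.fst_add, Prod.snd_add]
        ring_nf }
  map_zero_eq_one' := by ext; simp
  map_add_eq_mul' u v := by
    ext w
    rw [AddChar.mul_apply]
    simp only [AddChar.coe_mk]
    rw [← zpow_add₀ r.ne_zero]
    push_cast [Prod.fst_add, Prod.snd_add]
    ring_nf

theorem euler_apply (r : Kˣ) (u v : ℕ × ℕ) :
    euler r u v = (r : K) ^ ((u.2 * v.1 : ℤ) - u.1 * v.2) :=
  rfl

/-- The determinant of the pair `(d, e)`. -/
def det (d e : ℕ × ℕ) : ℤ :=
  d.1 * e.2 - d.2 * e.1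

/-- The homomorphism `(m, n) ↦ m d + n e`. -/
def latticeMap (d e : ℕ × ℕ) : ℕ × ℕ →+ ℕ × ℕ :=
  (multiplesHom _ d).coprod (multiplesHom _ e)

@[simp]
theorem latticeMap_apply (d e u : ℕ × ℕ) : latticeMap d e u = u.1 • d + u.2 • e := by
  simp [latticeMap]

theorem latticeMap_one_zero (d e : ℕ × ℕ) : latticeMap d e (1, 0) = d := by
  simp

theorem latticeMap_zero_one (d e : ℕ × ℕ) : latticeMap d e (0, 1) = e := by
  simp

theorem latticeMap_comp (a b d e : ℕ × ℕ) :
    (latticeMap d e).comp (latticeMap a b) = latticeMap (latticeMap d e a) (latticeMap d e b) := by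
  ext <;> simp <;> ring

theorem isIsometry_latticeMap (h : det d e ≠ 0) (hr : r' = r ^ det d e) :
    IsIsometry (euler r') (euler r) (latticeMap d e) where
  injective := by
    rintro ⟨m, n⟩ ⟨m', n'⟩ hmn
    simp only [latticeMap_apply, Prod.ext_iff, Prod.fst_add, Prod.snd_add, Prod.smul_fst,
      Prod.smul_snd, smul_eq_mul] at hmn
    zify at hmn
    obtain ⟨h₁, h₂⟩ := hmn
    refine Prod.ext ?_ ?_ <;> zify <;> refine mul_right_cancel₀ h ?_ <;> rw [det]
    · linear_combination (e.2 : ℤ) * h₁ - e.1 * h₂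
    · linear_combination (d.1 : ℤ) * h₂ - d.2 * h₁
  map_char u v := by
    rw [hr, euler_apply, euler_apply, Units.val_zpow_eq_zpow_val, ← zpow_mul]
    simp only [latticeMap_apply, Prod.fst_add, Prod.snd_add, Prod.smul_fst, Prod.smul_snd,
      smul_eq_mul, det]
    push_cast
    ring_nf

theorem multiplesHom_injective (hd : d ≠ 0) : Function.Injective (multiplesHom (ℕ × ℕ) d) := by
  intro m n h
  simp only [multiplesHom_apply, Prod.ext_iff, Prod.smul_fst, Prod.smul_snd, smul_eq_mul,
    mul_eq_mul_right_iff] at h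
  exact (or_and_left.2 h).resolve_right fun h₀ ↦ hd (Prod.ext h₀.1 h₀.2)

theorem isIsometry_multiplesHom (hd : d ≠ 0) :
    IsIsometry (1 : AddChar ℕ (AddChar ℕ K)) (euler r) (multiplesHom _ d) where
  injective := multiplesHom_injective hd
  map_char m n := by
    simp [euler_apply, mul_mul_mul_comm, mul_comm]

/-- The element `∑ₖ fₖ t^{kd}` of the quantum torus, for `d ≠ 0`. -/
def series (d : ℕ × ℕ) (f : K⟦X⟧) : QuantumTorus (euler r) :=
  pushforward (multiplesHom _ d) (⟨fun k ↦ coeff k f⟩ : QuantumTorus (1 : AddChar ℕ (AddChar ℕ K)))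

theorem coeff_series_smul (hd : d ≠ 0) (f : K⟦X⟧) (k : ℕ) :
    (series d f : QuantumTorus (euler r)).coeff (k • d) = coeff k f :=
  coeff_pushforward (multiplesHom_injective hd) _ k

theorem coeff_series_of_ne_smul (f : K⟦X⟧) {w : ℕ × ℕ} (hw : ∀ k : ℕ, k • d ≠ w) :
    (series d f : QuantumTorus (euler r)).coeff w = 0 :=
  coeff_pushforward_of_notMem_range _ fun ⟨k, hk⟩ ↦ hw k hk

theorem series_one (hd : d ≠ 0) : series d (1 : K⟦X⟧) = (1 : QuantumTorus (euler r)) := by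
  rw [← pushforward_one (χ := 1) (multiplesHom_injective hd), series]
  congr 1
  refine QuantumTorus.ext (funext fun k ↦ ?_)
  rw [QuantumTorus.coeff_one]
  exact PowerSeries.coeff_one k

theorem series_mul (hd : d ≠ 0) (f g : K⟦X⟧) :
    series d (f * g) = (series d f * series d g : QuantumTorus (euler r)) := by
  simp only [series]
  rw [← pushforward_mul (isIsometry_multiplesHom hd)]
  congr 1
  refine QuantumTorus.ext (funext fun k ↦ ?_)
  simp [QuantumTorus.coeff_mul, PowerSeries.coeff_mul]

theorem pushforward_series {δ : ℕ × ℕ →+ ℕ × ℕ} (hδ : Function.Injective δ) (hd : d ≠ 0)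
    (f : K⟦X⟧) :
    pushforward δ (series d f : QuantumTorus (euler r')) =
      (series (δ d) f : QuantumTorus (euler r)) := by
  rw [series, pushforward_pushforward hδ (multiplesHom_injective hd), series]
  congr 1
  ext <;> simp

theorem coeff_series_one_zero_mul (f : K⟦X⟧) (F : QuantumTorus (euler r)) (n j : ℕ) :
    (series (1, 0) f * F).coeff (n, j) =
      ∑ p ∈ antidiagonal n,
        (r : K) ^ (-(p.1 * j : ℤ)) * coeff p.1 f * F.coeff (p.2, j) := by
  refine (sum_of_injOn (fun p ↦ ((p.1, 0), (p.2, j))) ?_ ?_ ?_ ?_).symm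
  · rintro ⟨a, b⟩ - ⟨a', b'⟩ - h
    simpa using h
  · intro p hp
    rw [mem_coe, mem_antidiagonal] at hp ⊢
    simp [hp]
  · rintro ⟨u, v⟩ huv hu
    have h : ∀ k : ℕ, k • ((1, 0) : ℕ × ℕ) ≠ u := by
      rintro k rfl
      obtain ⟨hn, hj⟩ : k + v.1 = n ∧ v.2 = j := by simpa [Prod.ext_iff] using huv
      exact hu ⟨(k, v.1), by simpa using hn, by simp [← hj]⟩
    rw [coeff_series_of_ne_smul f h, mul_zero, zero_mul]
  · rintro ⟨a, b⟩ -
    have h : ((a, 0) : ℕ × ℕ) = a • (1, 0) := by simp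
    rw [h, coeff_series_smul (by simp)]
    simp [euler_apply]

end Lattice

section Shear

variable {K : Type*} [Field K] {r s : Kˣ} {d e : ℕ × ℕ}

/-- The dilogarithm `E(tᵈ) = ∑ₖ (-s)ᵏ t^{kd} / ((1 - q) ⋯ (1 - qᵏ))`, `q = s²`, as an element of
the quantum torus with twist `r`. -/
def E (s : Kˣ) (d : ℕ × ℕ) : QuantumTorus (euler r) :=
  series d (dilog s)

theorem coeff_pushforward_shear (F : QuantumTorus (euler r)) (m j : ℕ) :
    (pushforward (latticeMap (1, 1) (0, 1)) F : QuantumTorus (euler r)).coeff (m, j) =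
      if m ≤ j then F.coeff (m, j - m) else 0 := by
  have hinj := (isIsometry_latticeMap (d := (1, 1)) (e := (0, 1)) (r := r) (by simp [det])
    rfl).injective
  split_ifs with h
  · have hmj : (m, j) = latticeMap (1, 1) (0, 1) (m, j - m) := by simp [h]
    rw [hmj, coeff_pushforward hinj]
  · refine coeff_pushforward_of_notMem_range F ?_
    rintro ⟨u, hu⟩
    simp only [latticeMap_apply, Prod.smul_mk, smul_eq_mul, mul_one, mul_zero, Prod.mk_add_mk,
      add_zero, Prod.mk.injEq] at hu
    omega

/-- The `q`-Vandermonde identity read off in the quantum torus: the weights `c` and `c'`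
record the powers of `q^{1/2}` by which the coefficients differ from those of a plain product. -/
theorem dilog_mul_shear (hs : ¬IsOfFinOrder s) {c c' : ℕ → ℕ → K}
    {F G : QuantumTorus (euler r)}
    (hF : ∀ m l, F.coeff (m, l) = c m l * (dilogCoeff s m * dilogCoeff s l))
    (hG : ∀ n j, G.coeff (n, j) = c' n j * (dilogCoeff s n * dilogCoeff s j))
    (h : ∀ a m l, (s : K) ^ (2 * (a + m) * (m + l)) * c m l =
      (r : K) ^ (a * (m + l)) * (s : K) ^ (m ^ 2) * c' (a + m) (m + l)) :
    E s (1, 0) * pushforward (latticeMap (1, 1) (0, 1)) F = G := by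
  ext ⟨n, j⟩
  refine mul_left_cancel₀ (pow_ne_zero (2 * n * j) s.ne_zero) ?_
  rw [E, coeff_series_one_zero_mul, hG, mul_left_comm, ← sum_antidiagonal_dilogCoeff hs, mul_sum,
    mul_sum]
  refine sum_congr rfl ?_
  rintro ⟨a, m⟩ ham
  rw [mem_antidiagonal] at ham
  obtain rfl := ham
  rw [coeff_pushforward_shear, coeff_dilog]
  dsimp only
  split_ifs with hmj
  · obtain ⟨l, rfl⟩ := Nat.exists_eq_add_of_le hmj
    have hr : (r : K) ^ (-(a * (m + l : ℕ) : ℤ)) * (r : K) ^ (a * (m + l)) = 1 := by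
      rw [← zpow_natCast, ← zpow_add₀ r.ne_zero]
      simp
    rw [Nat.add_sub_cancel_left, hF]
    linear_combination (r : K) ^ (-(a * (m + l : ℕ) : ℤ)) * dilogCoeff s a *
      (dilogCoeff s m * dilogCoeff s l) * h a m l + (s : K) ^ (m ^ 2) * c' (a + m) (m + l) *
      dilogCoeff s a * (dilogCoeff s m * dilogCoeff s l) * hr
  · simp

theorem coeff_series_one_zero_mul_series_zero_one (f g : K⟦X⟧) (m l : ℕ) :
    (series (1, 0) f * series (0, 1) g : QuantumTorus (euler r)).coeff (m, l) =
      (r : K) ^ (-(m * l : ℤ)) * (coeff m f * coeff l g) := by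
  rw [coeff_series_one_zero_mul, sum_eq_single_of_mem (m, 0) (by simp)]
  · have hl : ((0, l) : ℕ × ℕ) = l • (0, 1) := by simp
    rw [hl, coeff_series_smul (by simp), mul_assoc]
  · rintro ⟨a, b⟩ hab hne
    rw [coeff_series_of_ne_smul, mul_zero]
    rintro k hk
    obtain rfl : 0 = b := by simpa using congr(($hk).1)
    rw [mem_antidiagonal, add_zero] at hab
    exact hne (by rw [← hab])

theorem pushforward_series_mul_series {r' : Kˣ}
    (h : IsIsometry (euler r') (euler r) (latticeMap d e)) (f g : K⟦X⟧) :
    pushforward (latticeMap d e) (series (1, 0) f * series (0, 1) g : QuantumTorus (euler r')) =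
      (series d f * series e g : QuantumTorus (euler r)) := by
  rw [pushforward_mul h, pushforward_series h.injective (by simp),
    pushforward_series h.injective (by simp), latticeMap_one_zero, latticeMap_zero_one]

theorem coeff_series_mul_series (h : det d e ≠ 0) (f g : K⟦X⟧) (u : ℕ × ℕ) :
    (series d f * series e g : QuantumTorus (euler r)).coeff (latticeMap d e u) =
      (r : K) ^ (-(det d e * (u.1 * u.2))) * (coeff u.1 f * coeff u.2 g) := by
  have hiso := isIsometry_latticeMap h (r := r) rfl
  rw [← pushforward_series_mul_series hiso, coeff_pushforward hiso.injective,
    coeff_series_one_zero_mul_series_zero_one, Units.val_zpow_eq_zpow_val,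
    ← zpow_mul, mul_neg]

theorem pushforward_E {r' : Kˣ} {δ : ℕ × ℕ →+ ℕ × ℕ} (hδ : Function.Injective δ) (hd : d ≠ 0) :
    pushforward δ (E s d : QuantumTorus (euler r')) = (E s (δ d) : QuantumTorus (euler r)) :=
  pushforward_series hδ hd _

theorem pentagon_standard (hs : ¬IsOfFinOrder s) :
    (E s (1, 0) * (E s (1, 1) * E s (0, 1)) : QuantumTorus (euler s)) =
      E s (0, 1) * E s (1, 0) := by
  have hshear : IsIsometry (euler s) (euler s) (latticeMap (1, 1) (0, 1)) :=
    isIsometry_latticeMap (by simp [det]) (by simp [det])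
  have h : (E s (1, 1) * E s (0, 1) : QuantumTorus (euler s)) =
      pushforward (latticeMap (1, 1) (0, 1))
        (E s (1, 0) * E s (0, 1) : QuantumTorus (euler s)) :=
    (pushforward_series_mul_series hshear _ _).symm
  rw [h]
  refine dilog_mul_shear hs (c := fun m l ↦ (s : K) ^ (-(m * l : ℤ)))
    (c' := fun n j ↦ (s : K) ^ (n * j : ℤ)) (fun m l ↦ ?_) (fun n j ↦ ?_) fun a m l ↦ ?_
  · simpa [E] using coeff_series_one_zero_mul_series_zero_one (r := s) (dilog s) (dilog s) m l
  · simpa [E, det, mul_comm] using coeff_series_mul_series (r := s) (d := (0, 1)) (e := (1, 0))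
      (by simp [det]) (dilog s) (dilog s) (j, n)
  · simp only [← zpow_natCast, ← zpow_add₀ s.ne_zero]
    congr 1
    push_cast
    ring

theorem pentagon (hs : ¬IsOfFinOrder s) (hde : det d e = 1) :
    (E s d * (E s (d + e) * E s e) : QuantumTorus (euler s)) = E s e * E s d := by
  have h : IsIsometry (euler s) (euler s) (latticeMap d e) :=
    isIsometry_latticeMap (hde.trans_ne one_ne_zero) (by simp [hde])
  have hpush :=
    congr((pushforward (latticeMap d e) $(pentagon_standard hs) : QuantumTorus (euler s)))
  simpa [pushforward_mul h, pushforward_E h.injective] using hpush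

end Shear

section Kronecker

variable {K : Type*} [Field K] {r s : Kˣ} {d e : ℕ × ℕ}

/-- The element `∑ fᵢ gⱼ t^{(i, j)}`: the product of `f(t^{(1, 0)})` and `g(t^{(0, 1)})` with the
twist left out. -/
def normalOrdered (f g : K⟦X⟧) : QuantumTorus (euler r) :=
  ⟨fun u ↦ coeff u.1 f * coeff u.2 g⟩

theorem pushforward_swap_normalOrdered (f g : K⟦X⟧) :
    (pushforward (latticeMap (0, 1) (1, 0)) (normalOrdered f g : QuantumTorus (euler r)) :
      QuantumTorus (euler s)) = normalOrdered g f := by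
  have hinj := (isIsometry_latticeMap (d := (0, 1)) (e := (1, 0)) (r := r) (by simp [det])
    rfl).injective
  refine ((eq_pushforward_iff hinj).2 ⟨fun u ↦ ?_, fun w hw ↦ ?_⟩).symm
  · simp [normalOrdered, mul_comm]
  · exact absurd ⟨(w.2, w.1), by simp⟩ hw

/-- The infinite product `E(t^{(1, 0)}) E(t^{(1, 1)}) E(t^{(1, 2)}) ⋯ E(-s t^{(0, 1)})⁻¹`, in closed
form. The natural home of this element is the quantum torus with twist `s²`. -/
def rayProduct (s : Kˣ) : QuantumTorus (euler (s ^ 2)) :=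
  normalOrdered (dilog s) (rescale (-(s : K)) (dilog s⁻¹))

theorem coeff_rayProduct (hs : ¬IsOfFinOrder s) (i j : ℕ) :
    (rayProduct s).coeff (i, j) = (s : K) ^ (j ^ 2) * (dilogCoeff s i * dilogCoeff s j) := by
  simp only [rayProduct, normalOrdered, coeff_rescale, coeff_dilog, neg_pow_mul_dilogCoeff_inv hs]
  ring

theorem dilogCoeff_inv (hs : ¬IsOfFinOrder s) (k : ℕ) :
    dilogCoeff s⁻¹ k = (-(s : K))⁻¹ ^ k * ((s : K) ^ (k ^ 2) * dilogCoeff s k) := by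
  rw [← neg_pow_mul_dilogCoeff_inv hs, ← mul_assoc, ← mul_pow,
    inv_mul_cancel₀ (neg_ne_zero.2 s.ne_zero), one_pow, one_mul]

theorem E_mul_pushforward_rayProduct (hr : ¬IsOfFinOrder r)
    (h : IsIsometry (euler (r ^ 2)) (euler s) (latticeMap d e)) :
    E r d * pushforward (latticeMap (d + e) e) (rayProduct r) =
      (pushforward (latticeMap d e) (rayProduct r) : QuantumTorus (euler s)) := by
  have hshear : IsIsometry (euler (r ^ 2)) (euler (r ^ 2)) (latticeMap (1, 1) (0, 1)) :=
    isIsometry_latticeMap (by simp [det]) (by simp [det])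
  have hstd : E r (1, 0) * pushforward (latticeMap (1, 1) (0, 1)) (rayProduct r) =
      rayProduct r := by
    refine dilog_mul_shear hr (c := fun _ l ↦ (r : K) ^ (l ^ 2))
      (c' := fun _ j ↦ (r : K) ^ (j ^ 2)) (coeff_rayProduct hr) (coeff_rayProduct hr)
      fun a m l ↦ ?_
    rw [Units.val_pow_eq_pow_val]
    ring
  have hpush := congr((pushforward (latticeMap d e) $hstd : QuantumTorus (euler s)))
  rw [pushforward_mul h, pushforward_E h.injective (by simp),
    pushforward_pushforward h.injective hshear.injective, latticeMap_comp, latticeMap_one_zero,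
    latticeMap_zero_one] at hpush
  simpa using hpush

theorem E_mul_pushforward_rayProduct_inv (hr : ¬IsOfFinOrder r)
    (h : IsIsometry (euler (r ^ 2)) (euler s) (latticeMap d e)) :
    E r d * pushforward (latticeMap e (d + e)) (rayProduct r⁻¹) =
      (pushforward (latticeMap d e)
        (normalOrdered (dilog r) (dilog r⁻¹) : QuantumTorus (euler (r ^ 2))) :
          QuantumTorus (euler s)) := by
  have hswap : IsIsometry (euler (r⁻¹ ^ 2)) (euler (r ^ 2)) (latticeMap (0, 1) (1, 0)) :=
    isIsometry_latticeMap (by simp [det]) (by simp [det])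
  have hshear : IsIsometry (euler (r ^ 2)) (euler (r ^ 2)) (latticeMap (1, 1) (0, 1)) :=
    isIsometry_latticeMap (by simp [det]) (by simp [det])
  have hstd : E r (1, 0) * pushforward (latticeMap (1, 1) (0, 1))
      (pushforward (latticeMap (0, 1) (1, 0)) (rayProduct r⁻¹) : QuantumTorus (euler (r ^ 2))) =
      (normalOrdered (dilog r) (dilog r⁻¹) : QuantumTorus (euler (r ^ 2))) := by
    refine dilog_mul_shear hr (c := fun m l ↦ (-(r : K))⁻¹ ^ (l + m) * (r : K) ^ (l ^ 2))
      (c' := fun _ j ↦ (-(r : K))⁻¹ ^ j * (r : K) ^ (j ^ 2)) (fun m l ↦ ?_) (fun n j ↦ ?_)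
      fun a m l ↦ ?_
    · rw [rayProduct, pushforward_swap_normalOrdered]
      simp only [normalOrdered, coeff_rescale, coeff_dilog, inv_inv, dilogCoeff_inv hr,
        Units.val_inv_eq_inv_val, ← inv_neg]
      ring
    · simp only [normalOrdered, coeff_dilog, dilogCoeff_inv hr]
      ring
    · rw [Units.val_pow_eq_pow_val]
      ring
  have hpush := congr((pushforward (latticeMap d e) $hstd : QuantumTorus (euler s)))
  rw [pushforward_mul h, pushforward_E h.injective (by simp),
    pushforward_pushforward h.injective hshear.injective,
    pushforward_pushforward (h.comp hshear).injective hswap.injective, latticeMap_comp,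
    latticeMap_comp] at hpush
  simpa [add_comm] using hpush

/-- Both sides are the normally ordered product of `E(tᵈ)` and `E(tᵉ)⁻¹`, in which
`(d, r)` and `(e, r⁻¹)` play symmetric roles. -/
theorem E_mul_pushforward_rayProduct_inv_comm (hr : ¬IsOfFinOrder r) (hde : det d e ≠ 0)
    (hs : r ^ 2 = s ^ det d e) :
    (E r d * pushforward (latticeMap e (d + e)) (rayProduct r⁻¹) : QuantumTorus (euler s)) =
      E r⁻¹ e * pushforward (latticeMap d (d + e)) (rayProduct r) := by
  have hinj := (isIsometry_latticeMap (d := (0, 1)) (e := (1, 0)) (r := r ^ 2) (by simp [det])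
    rfl).injective
  have hed : det e d = -det d e := by
    simp only [det]
    ring
  have h := isIsometry_latticeMap hde hs
  have h' : IsIsometry (euler (r⁻¹ ^ 2)) (euler s) (latticeMap e d) :=
    isIsometry_latticeMap (by simpa [hed] using hde) (by simp [hed, hs])
  have key := E_mul_pushforward_rayProduct_inv (isOfFinOrder_inv_iff.not.2 hr) h'
  rw [inv_inv, add_comm] at key
  rw [key, E_mul_pushforward_rayProduct_inv hr h, ← pushforward_swap_normalOrdered (r := r⁻¹ ^ 2),
    pushforward_pushforward h.injective hinj, latticeMap_comp, latticeMap_one_zero,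
    latticeMap_zero_one]

theorem prod_E_mul_pushforward_rayProduct (hr : ¬IsOfFinOrder r) (hde : det d e ≠ 0)
    (hs : r ^ 2 = s ^ det d e) (N : ℕ) :
    ((List.range N).map fun i ↦ E r (d + i • e)).prod *
        pushforward (latticeMap (d + N • e) e) (rayProduct r) =
      (pushforward (latticeMap d e) (rayProduct r) : QuantumTorus (euler s)) := by
  induction N with
  | zero => simp
  | succ N ih =>
    have hdet : det (d + N • e) e = det d e := by
      simp only [det, Prod.fst_add, Prod.snd_add, Prod.smul_fst, Prod.smul_snd, smul_eq_mul]
      push_cast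
      ring
    rw [List.prod_range_succ, mul_assoc, succ_nsmul, ← add_assoc,
      E_mul_pushforward_rayProduct hr (isIsometry_latticeMap (hdet ▸ hde) (hdet ▸ hs)), ih]

theorem commute_series_series (h : det d e = 0) (f g : K⟦X⟧) :
    Commute (series d f : QuantumTorus (euler r)) (series e g) := by
  ext u
  simp only [QuantumTorus.coeff_mul]
  refine sum_equiv (Equiv.prodComm _ _) (fun p ↦ by simp [add_comm]) fun ⟨v, w⟩ _ ↦ ?_
  simp only [Equiv.prodComm_apply, Prod.swap_prod_mk]
  by_cases hv : ∃ k : ℕ, k • d = v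
  swap
  · simp [coeff_series_of_ne_smul f (not_exists.1 hv)]
  by_cases hw : ∃ k : ℕ, k • e = w
  swap
  · simp [coeff_series_of_ne_smul g (not_exists.1 hw)]
  obtain ⟨k, rfl⟩ := hv
  obtain ⟨l, rfl⟩ := hw
  have hchar : euler r (k • d) (l • e) = euler r (l • e) (k • d) := by
    rw [euler_apply, euler_apply]
    congr 1
    simp only [Prod.smul_fst, Prod.smul_snd, smul_eq_mul]
    push_cast
    rw [det] at h
    linear_combination (-2 * k * l : ℤ) * h
  rw [hchar]
  ring

end Kronecker

namespace QuantumTorus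

variable {Γ K : Type*} [AddCommMonoid Γ] [PartialOrder Γ] [CanonicallyOrderedAdd Γ]
  [HasAntidiagonal Γ] [CommSemiring K] {χ : AddChar Γ (AddChar Γ K)}

/-- Two elements of a quantum torus are congruent below `w` if their coefficients at all `u ≤ w`
agree. -/
def congrBelow (w : Γ) : Con (QuantumTorus χ) where
  r f g := ∀ u ≤ w, f.coeff u = g.coeff u
  iseqv := ⟨fun _ _ _ ↦ rfl, fun h u hu ↦ (h u hu).symm,
    fun h h' u hu ↦ (h u hu).trans (h' u hu)⟩
  mul' h h' u hu := by
    simp only [QuantumTorus.coeff_mul]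
    refine sum_congr rfl fun p hp ↦ ?_
    rw [← mem_antidiagonal.1 hp] at hu
    rw [h _ (le_self_add.trans hu), h' _ (le_add_self.trans hu)]

variable [DecidableEq Γ]

/-- The quotient of the quantum torus that remembers only the coefficients at `u ≤ w`. -/
def Truncation (χ : AddChar Γ (AddChar Γ K)) (w : Γ) : Type _ :=
  (congrBelow w : Con (QuantumTorus χ)).Quotient

instance (w : Γ) : Monoid (Truncation χ w) :=
  inferInstanceAs (Monoid (congrBelow w : Con (QuantumTorus χ)).Quotient)

/-- The projection of the quantum torus onto its truncation. -/
def truncate (w : Γ) : QuantumTorus χ →* Truncation χ w :=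
  (congrBelow w).mk'

theorem truncate_eq_truncate {w : Γ} {f g : QuantumTorus χ} :
    truncate w f = truncate w g ↔ ∀ u ≤ w, f.coeff u = g.coeff u :=
  Con.eq _

end QuantumTorus

section Truncation

variable {K : Type*} [Field K] {r r' : Kˣ} {d e w : ℕ × ℕ} {f g : K⟦X⟧}

theorem truncate_pushforward_normalOrdered (hde : Function.Injective (latticeMap d e))
    (hdw : ¬d ≤ w) (hf : constantCoeff f = 1) :
    truncate w (pushforward (latticeMap d e) (normalOrdered f g : QuantumTorus (euler r')) :
      QuantumTorus (euler r)) = truncate w (series e g) := by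
  have he : e ≠ 0 := by
    rintro rfl
    exact absurd (@hde (0, 1) (0, 0) (by simp)) (by simp)
  refine truncate_eq_truncate.2 fun u hu ↦ ?_
  by_cases hrange : u ∈ Set.range (latticeMap d e)
  · obtain ⟨⟨_ | m, l⟩, rfl⟩ := hrange
    · rw [coeff_pushforward hde, latticeMap_apply, zero_nsmul, zero_add, coeff_series_smul he]
      simp [normalOrdered, hf]
    · refine absurd (le_trans ?_ hu) hdw
      rw [latticeMap_apply, succ_nsmul, add_right_comm]
      exact le_add_self
  · rw [coeff_pushforward_of_notMem_range _ hrange, coeff_series_of_ne_smul]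
    rintro k rfl
    exact hrange ⟨(0, k), by simp⟩

theorem truncate_series_eq_one (hdw : ¬d ≤ w) (hf : constantCoeff f = 1) :
    truncate w (series d f : QuantumTorus (euler r)) = 1 := by
  have hd : d ≠ 0 := fun h ↦ hdw (h ▸ zero_le)
  rw [← map_one (truncate w), truncate_eq_truncate]
  intro u hu
  rw [QuantumTorus.coeff_one]
  split_ifs with h₀
  · rw [h₀, ← zero_nsmul d, coeff_series_smul hd, coeff_zero_eq_constantCoeff_apply, hf]
  · refine coeff_series_of_ne_smul f ?_
    rintro (_ | k) rfl
    · exact h₀ (zero_nsmul d)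
    · exact hdw (le_trans (by rw [succ_nsmul]; exact le_add_self) hu)

end Truncation

section Monoid

variable {M : Type*} [Monoid M] {X Y f g : ℕ → M} {c W : M} {N : ℕ}

theorem prod_range_mul_prod_range_reverse (h : ∀ i, f i * g i = 1) (N : ℕ) :
    ((List.range N).map f).prod * ((List.range N).reverse.map g).prod = 1 := by
  induction N with
  | zero => simp
  | succ N ih =>
    rw [List.prod_range_succ, List.range_succ, List.reverse_append, List.map_append,
      List.prod_append, mul_assoc, List.reverse_singleton, List.map_singleton,
      List.prod_singleton, ← mul_assoc (f N), h, one_mul, ih]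

theorem map_range_add_of_eq_one (h : ∀ i, N ≤ i → f i = 1) (k : ℕ) :
    (List.range (N + k)).map f = (List.range N).map f ++ List.replicate k 1 := by
  rw [List.range_add, List.map_append, List.map_map]
  congr 1
  simp [List.eq_replicate_iff, h]

theorem mul_sq_mul_prod_even (hX : ∀ i, c * X i = X i * X (i + 1) * c) (M : ℕ) :
    X 0 * c ^ 2 * ((List.range M).map fun i ↦ X (2 * i)).prod =
      ((List.range (2 * M)).map fun i ↦ X i ^ 2).prod * X (2 * M) * c ^ 2 := by
  induction M with
  | zero => simp
  | succ M ih =>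
    have hc : ∀ i, c ^ 2 * X i = X i * X (i + 1) ^ 2 * X (i + 2) * c ^ 2 := fun i ↦ by
      simp only [sq, mul_assoc, hX]
      simp only [← mul_assoc c, hX, mul_assoc]
    rw [List.prod_range_succ, ← mul_assoc, ih, mul_assoc _ (c ^ 2), hc, Nat.mul_succ,
      List.prod_range_succ, List.prod_range_succ]
    simp only [sq, mul_assoc]

theorem prod_reverse_even_mul_sq_mul (hY : ∀ i, Y i * c = c * Y (i + 1) * Y i) (M : ℕ) :
    ((List.range M).reverse.map fun i ↦ Y (2 * i)).prod * (c ^ 2 * Y 0) =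
      c ^ 2 * (Y (2 * M) * ((List.range (2 * M)).reverse.map fun i ↦ Y i ^ 2).prod) := by
  have h := congr(MulOpposite.unop $(mul_sq_mul_prod_even (X := fun i ↦ MulOpposite.op (Y i))
    (c := MulOpposite.op c) (fun i ↦ by simp only [← MulOpposite.op_mul, hY, mul_assoc]) M))
  simpa [MulOpposite.unop_list_prod, Function.comp_def] using h

theorem sq_mul_sq_eq_of_pentagon (hY : ∀ i, Y i * c = c * Y (i + 1) * Y i)
    (h₀ : Y 0 * X 0 = X 0 * c * Y 0) :
    Y 0 ^ 2 * X 0 ^ 2 = X 0 * c ^ 2 * (Y 1 * X 0) * (c ^ 2 * Y 1) * Y 0 ^ 2 := by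
  have hY₀ : ∀ z, Y 0 * (c * z) = c * (Y 1 * (Y 0 * z)) := fun z ↦ by
    simp only [← mul_assoc, hY]
  have h₀' : ∀ z, Y 0 * (X 0 * z) = X 0 * (c * (Y 0 * z)) := fun z ↦ by
    simp only [← mul_assoc, h₀]
  simp only [sq, mul_assoc, h₀', h₀, hY₀]

theorem sq_mul_sq_eq_prod (hX : ∀ i, c * X i = X i * X (i + 1) * c)
    (hY : ∀ i, Y i * c = c * Y (i + 1) * Y i) (h₀ : Y 0 * X 0 = X 0 * c * Y 0)
    (hW : Commute c W) (hX₁ : ∀ i, N ≤ i → X i = 1) (hY₁ : ∀ i, N ≤ i → Y i = 1)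
    (hYX : Y 1 * X 0 = ((List.range N).map fun i ↦ X (2 * i)).prod * W *
      ((List.range N).reverse.map fun i ↦ Y (2 * i + 1)).prod) :
    Y 0 ^ 2 * X 0 ^ 2 = ((List.range N).map fun i ↦ X i ^ 2).prod * (c ^ 4 * W) *
      ((List.range N).reverse.map fun i ↦ Y i ^ 2).prod := by
  have hXprod : X 0 * c ^ 2 * ((List.range N).map fun i ↦ X (2 * i)).prod =
      ((List.range N).map fun i ↦ X i ^ 2).prod * c ^ 2 := by
    rw [mul_sq_mul_prod_even hX, hX₁ (2 * N) (by omega), mul_one, two_mul,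
      map_range_add_of_eq_one fun i hi ↦ by rw [hX₁ i hi, one_pow]]
    simp
  have hYprod : ((List.range N).reverse.map fun i ↦ Y (2 * i + 1)).prod * (c ^ 2 * Y 1) * Y 0 ^ 2 =
      c ^ 2 * ((List.range N).reverse.map fun i ↦ Y i ^ 2).prod := by
    have hrange : ((List.range N).reverse.map fun i ↦ Y i ^ 2).prod =
        ((List.range (2 * N)).reverse.map fun i ↦ Y (i + 1) ^ 2).prod * Y 0 ^ 2 := by
      have h := map_range_add_of_eq_one (f := fun i ↦ Y i ^ 2)
        (fun i hi ↦ by rw [hY₁ i hi, one_pow]) (N + 1)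
      rw [← add_assoc, ← two_mul, List.range_succ_eq_map] at h
      simpa [Function.comp_def] using congr(List.prod (List.reverse $h.symm))
    rw [prod_reverse_even_mul_sq_mul (Y := fun i ↦ Y (i + 1)) fun i ↦ hY (i + 1), hrange,
      hY₁ (2 * N + 1) (by omega), one_mul, mul_assoc]
  rw [sq_mul_sq_eq_of_pentagon hY h₀, hYX]
  calc
    _ = (X 0 * c ^ 2 * ((List.range N).map fun i ↦ X (2 * i)).prod) * W *
        (((List.range N).reverse.map fun i ↦ Y (2 * i + 1)).prod * (c ^ 2 * Y 1) * Y 0 ^ 2) := by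
      simp only [mul_assoc]
    _ = _ := by
      rw [hXprod, hYprod, mul_assoc _ (c ^ 2) W, (hW.pow_left 2).eq, mul_assoc, mul_assoc W,
        ← mul_assoc (c ^ 2) (c ^ 2), ← pow_add, ← mul_assoc W, ← (hW.pow_left 4).eq]
      simp only [mul_assoc]

end Monoid

section Barbell

variable {K : Type*} [Field K] {r s : Kˣ} {d e w : ℕ × ℕ} {N : ℕ}

theorem E_mul_E_inv (hs : ¬IsOfFinOrder s) (hd : d ≠ 0) :
    (E s d * E s⁻¹ d : QuantumTorus (euler r)) = 1 := by
  rw [E, E, ← series_mul hd, dilog_mul_dilog_inv hs, series_one hd]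

theorem rescale_dilog_mul_rescale_dilog_inv (hs : ¬IsOfFinOrder s) (a : K) :
    rescale a (dilog s) * rescale a (dilog s⁻¹) = 1 := by
  rw [← map_mul, dilog_mul_dilog_inv hs, map_one]

/-- The factor `E(-r tᵈ)⁻¹ E(-r⁻¹ tᵈ)⁻¹` contributed by the imaginary root of a Kronecker quiver. -/
def imaginaryFactor (r : Kˣ) (d : ℕ × ℕ) : QuantumTorus (euler s) :=
  series d (rescale (-(r : K)) (dilog r⁻¹)) * series d (rescale (-((r⁻¹ : Kˣ) : K)) (dilog r⁻¹))

theorem truncate_prod_E_mul_series (hr : ¬IsOfFinOrder r) (hde : det d e ≠ 0)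
    (hs : r ^ 2 = s ^ det d e) (hw : ¬d + N • e ≤ w) :
    truncate w (((List.range N).map fun i ↦ E r (d + i • e)).prod *
        series e (rescale (-(r : K)) (dilog r⁻¹)) : QuantumTorus (euler s)) =
      truncate w (pushforward (latticeMap d e) (rayProduct r)) := by
  have hdet : det (d + N • e) e = det d e := by
    simp only [det, Prod.fst_add, Prod.snd_add, Prod.smul_fst, Prod.smul_snd, smul_eq_mul]
    push_cast
    ring
  rw [← prod_E_mul_pushforward_rayProduct hr hde hs N, map_mul, map_mul, rayProduct,
    truncate_pushforward_normalOrdered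
      (isIsometry_latticeMap (hdet ▸ hde) (hdet ▸ hs)).injective hw (constantCoeff_dilog r)]

theorem truncate_E_mul_prod (hr : ¬IsOfFinOrder r) (hde : det d e ≠ 0)
    (hs : r ^ 2 = s ^ det d e) (hd : ¬d + N • (d + e) ≤ w) (he : ¬e + N • (d + e) ≤ w) :
    truncate w (E r d * (((List.range N).map fun i ↦ E r⁻¹ (e + i • (d + e))).prod *
        series (d + e) (rescale (-((r⁻¹ : Kˣ) : K)) (dilog r))) : QuantumTorus (euler s)) =
      truncate w (E r⁻¹ e * (((List.range N).map fun i ↦ E r (d + i • (d + e))).prod *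
        series (d + e) (rescale (-(r : K)) (dilog r⁻¹)))) := by
  have hd_det : det d (d + e) = det d e := by
    simp only [det, Prod.fst_add, Prod.snd_add]
    push_cast
    ring
  have he_det : det e (d + e) = -det d e := by
    simp only [det, Prod.fst_add, Prod.snd_add]
    push_cast
    ring
  have hdprod := truncate_prod_E_mul_series (s := s) hr (hd_det ▸ hde) (hd_det ▸ hs) hd
  have heprod := truncate_prod_E_mul_series (s := s) (isOfFinOrder_inv_iff.not.2 hr)
    (he_det ▸ neg_ne_zero.2 hde) (by rw [he_det, inv_pow, hs, zpow_neg]) he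
  rw [inv_inv] at heprod
  rw [map_mul, heprod, ← map_mul, E_mul_pushforward_rayProduct_inv_comm hr hde hs, map_mul,
    ← hdprod, ← map_mul]

theorem truncate_E_mul_E (hr : ¬IsOfFinOrder r) (hde : det d e ≠ 0) (hs : r ^ 2 = s ^ det d e)
    (hd : ¬d + N • (d + e) ≤ w) (he : ¬e + N • (d + e) ≤ w) :
    truncate w (E r e * E r d : QuantumTorus (euler s)) =
      truncate w (((List.range N).map fun i ↦ E r (d + i • (d + e))).prod *
        imaginaryFactor r (d + e) *
        ((List.range N).reverse.map fun i ↦ E r (e + i • (d + e))).prod) := by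
  have he₀ : e ≠ 0 := by
    rintro rfl
    simp [det] at hde
  have hde₀ : d + e ≠ 0 := fun h ↦ he₀ (add_eq_zero.1 h).2
  have hE {a : ℕ × ℕ} (ha : a ≠ 0) : (E r⁻¹ a * E r a : QuantumTorus (euler s)) = 1 := by
    simpa using E_mul_E_inv (isOfFinOrder_inv_iff.not.2 hr) ha
  have hprod := prod_range_mul_prod_range_reverse (M := QuantumTorus (euler s))
    (fun i ↦ hE (a := e + i • (d + e)) fun h ↦ he₀ (add_eq_zero.1 h).1) N
  have hseries : (series (d + e) (rescale (-((r⁻¹ : Kˣ) : K)) (dilog r)) *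
      series (d + e) (rescale (-((r⁻¹ : Kˣ) : K)) (dilog r⁻¹)) : QuantumTorus (euler s)) = 1 := by
    rw [← series_mul hde₀, rescale_dilog_mul_rescale_dilog_inv hr, series_one hde₀]
  have hKronecker := truncate_E_mul_prod hr hde hs hd he
  have hexpand : (E r e * E r d : QuantumTorus (euler s)) =
      E r e * (E r d * (((List.range N).map fun i ↦ E r⁻¹ (e + i • (d + e))).prod *
        series (d + e) (rescale (-((r⁻¹ : Kˣ) : K)) (dilog r)))) *
      (series (d + e) (rescale (-((r⁻¹ : Kˣ) : K)) (dilog r⁻¹)) *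
        ((List.range N).reverse.map fun i ↦ E r (e + i • (d + e))).prod) := by
    simp only [mul_assoc]
    rw [← mul_assoc (series _ _), hseries, one_mul, hprod, mul_one]
  rw [hexpand, map_mul, map_mul, hKronecker, ← map_mul, ← map_mul, imaginaryFactor]
  simp only [← mul_assoc]
  rw [E_mul_E_inv hr he₀, one_mul]

theorem commute_E_imaginaryFactor (h : det d e = 0) :
    Commute (E r d : QuantumTorus (euler s)) (imaginaryFactor r e) :=
  (commute_series_series h _ _).mul_right (commute_series_series h _ _)

theorem truncate_E_mul_E_one_two (hs : ¬IsOfFinOrder s) (hw : w ≤ (N, N)) :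
    truncate w (E s (1, 2) * E s (1, 0) : QuantumTorus (euler s)) =
      truncate w (((List.range N).map fun i ↦ E s (2 * i + 1, 2 * i)).prod *
        imaginaryFactor s (2, 2) *
        ((List.range N).reverse.map fun i ↦ E s (2 * i + 1, 2 * i + 1 + 1)).prod) := by
  have hleft (i : ℕ) : ((1, 0) + i • ((1, 0) + (1, 2)) : ℕ × ℕ) = (2 * i + 1, 2 * i) := by
    ext <;> simp <;> ring
  have hright (i : ℕ) : ((1, 2) + i • ((1, 0) + (1, 2)) : ℕ × ℕ) = (2 * i + 1, 2 * i + 1 + 1) := by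
    ext <;> simp <;> ring
  have h := truncate_E_mul_E (s := s) (N := N) (w := w) (d := (1, 0)) (e := (1, 2)) hs
    (by simp [det]) (by simp [det])
    (hleft N ▸ fun h ↦ by linarith [h.1, hw.1]) (hright N ▸ fun h ↦ by linarith [h.1, hw.1])
  simp only [hleft, hright] at h
  exact h

theorem truncate_sq_mul_sq (hs : ¬IsOfFinOrder s) (hw : w ≤ (N, N)) :
    truncate w (E s (0, 1) ^ 2 * E s (1, 0) ^ 2 : QuantumTorus (euler s)) =
      truncate w (((List.range N).map fun i ↦ E s (i + 1, i) ^ 2).prod *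
        (E s (1, 1) ^ 4 * imaginaryFactor s (2, 2)) *
        ((List.range N).reverse.map fun i ↦ E s (i, i + 1) ^ 2).prod) := by
  have hpentagon {a b : ℕ × ℕ} (h : det a b = 1) :
      truncate w (E s b : QuantumTorus (euler s)) * truncate w (E s a) =
        truncate w (E s a) * truncate w (E s (a + b)) * truncate w (E s b) := by
    rw [← map_mul, ← pentagon hs h, map_mul, map_mul, ← mul_assoc]
  have hone {a : ℕ × ℕ} (h : ¬a ≤ w) : truncate w (E s a : QuantumTorus (euler s)) = 1 :=
    truncate_series_eq_one h (constantCoeff_dilog s)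
  have hX (i : ℕ) := hpentagon (a := (i + 1, i)) (b := (1, 1)) (by simp [det])
  have hY (i : ℕ) := hpentagon (a := (1, 1)) (b := (i, i + 1)) (by simp [det])
  have hX₁ (i : ℕ) (hi : N ≤ i) := hone (a := (i + 1, i)) fun h ↦ by
    linarith [h.1, hw.1]
  have hY₁ (i : ℕ) (hi : N ≤ i) := hone (a := (i, i + 1)) fun h ↦ by
    linarith [h.2, hw.2]
  have hYX := truncate_E_mul_E_one_two hs hw
  simp only [Prod.mk_add_mk, add_comm 1] at hY
  simp only [map_mul, map_list_prod, List.map_map, Function.comp_def] at hYX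
  have h := sq_mul_sq_eq_prod (X := fun i ↦ truncate w (E s (i + 1, i) : QuantumTorus (euler s)))
    (Y := fun i ↦ truncate w (E s (i, i + 1))) hX hY
    (hpentagon (a := (1, 0)) (b := (0, 1)) (by simp [det]))
    ((commute_E_imaginaryFactor (d := (1, 1)) (e := (2, 2)) (by simp [det])).map (truncate w))
    hX₁ hY₁ hYX
  simpa [map_list_prod, Function.comp_def] using h

end Barbell

section RationalFunctions

/-- The indeterminate `q^{1/2}` as a unit of `ℚ(q^{1/2})`. -/
def qhUnit : FFˣ :=
  Units.mk0 qh RatFunc.X_ne_zero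

@[simp]
theorem coe_qhUnit : (qhUnit : FF) = qh :=
  rfl

theorem not_isOfFinOrder_qhUnit : ¬IsOfFinOrder qhUnit := by
  rw [isOfFinOrder_iff_pow_eq_one]
  rintro ⟨n, hn, h⟩
  have hX : (RatFunc.X : FF) ^ n = 1 := congr(($h : FF))
  have h1 : (Polynomial.X ^ n : Polynomial ℚ) = 1 := by
    refine RatFunc.algebraMap_injective ℚ ?_
    rw [map_pow, RatFunc.algebraMap_X, hX, map_one]
  exact hn.ne' (by simpa using congr(Polynomial.natDegree $h1))

/-- The inclusion of the quantum torus over `ℛ` into the one over `ℚ(q^{1/2})`. -/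
def toQuantumTorus (f : T13) : QuantumTorus (euler qhUnit) :=
  ⟨fun d ↦ f d⟩

theorem toQuantumTorus_oneT : toQuantumTorus oneT = 1 := by
  ext d
  rw [QuantumTorus.coeff_one]
  exact apply_ite ((↑) : Rcal → FF) _ _ _

theorem coe_tw (u v : ℕ × ℕ) : (tw u v : FF) = euler qhUnit u v := by
  rw [euler_apply, sub_eq_add_neg, zpow_add₀ qhUnit.ne_zero, zpow_neg, ← inv_zpow]
  rfl

theorem toQuantumTorus_mulT (f g : T13) :
    toQuantumTorus (mulT f g) = toQuantumTorus f * toQuantumTorus g := by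
  ext d
  simp only [QuantumTorus.coeff_mul, toQuantumTorus, mulT, AddSubmonoidClass.coe_finsetSum,
    Subring.coe_mul, coe_tw]
  refine sum_nbij' (fun u ↦ (u, d - u)) Prod.fst (fun u hu ↦ ?_) (fun p hp ↦ ?_) (fun _ _ ↦ rfl)
    (fun p hp ↦ ?_) fun _ _ ↦ rfl
  · rw [mem_product, mem_range_succ_iff, mem_range_succ_iff] at hu
    exact mem_antidiagonal.2 (add_tsub_cancel_of_le hu)
  · rw [← mem_antidiagonal.1 hp]
    simp
  · rw [← mem_antidiagonal.1 hp]
    simp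

theorem toQuantumTorus_prodT (l : List T13) :
    toQuantumTorus (prodT l) = (l.map toQuantumTorus).prod := by
  induction l with
  | nil => exact toQuantumTorus_oneT
  | cons f l ih => rw [List.map_cons, List.prod_cons, ← ih, ← toQuantumTorus_mulT, prodT,
      List.foldr_cons, ← prodT]

theorem toQuantumTorus_powT (f : T13) (k : ℕ) :
    toQuantumTorus (powT f k) = toQuantumTorus f ^ k := by
  rw [powT, toQuantumTorus_prodT, List.map_replicate, List.prod_replicate]

theorem coe_Ecoeff (lam : Rcal) (k : ℕ) :
    (Ecoeff lam k : FF) = (lam : FF) ^ k * dilogCoeff qhUnit k := by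
  simp only [Ecoeff, dilogCoeff, div_eq_mul_inv, prod_mul_distrib, prod_const, card_range]
  push_cast
  simp only [qhR, dinvR, coe_qhUnit, neg_pow qh]
  ring

theorem kOf_smul {d : ℕ × ℕ} (hd : d ≠ 0) (k : ℕ) : kOf d (k • d) = k := by
  simp only [kOf, Prod.smul_fst, Prod.smul_snd, smul_eq_mul]
  split_ifs with h₁
  · exact Nat.mul_div_cancel _ (Nat.pos_of_ne_zero fun h₂ ↦ hd (Prod.ext h₁ h₂))
  · exact Nat.mul_div_cancel _ (Nat.pos_of_ne_zero h₁)

theorem toQuantumTorus_Edlog (lam : Rcal) {d : ℕ × ℕ} (hd : d ≠ 0) :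
    toQuantumTorus (Edlog lam d) = series d (rescale (lam : FF) (dilog qhUnit)) := by
  ext u
  by_cases hu : ∃ k : ℕ, k • d = u
  · obtain ⟨k, rfl⟩ := hu
    rw [coeff_series_smul hd, coeff_rescale, coeff_dilog, ← coe_Ecoeff]
    exact congrArg ((↑) : Rcal → FF) (by rw [Edlog, kOf_smul hd]; exact if_pos rfl)
  · rw [coeff_series_of_ne_smul _ (not_exists.1 hu)]
    exact congrArg ((↑) : Rcal → FF) (if_neg fun h ↦ hu ⟨kOf d u, h.symm⟩)

theorem toQuantumTorus_Edlog_one {d : ℕ × ℕ} (hd : d ≠ 0) :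
    toQuantumTorus (Edlog 1 d) = E qhUnit d := by
  simp [toQuantumTorus_Edlog _ hd, E]

theorem toQuantumTorus_Esq {d : ℕ × ℕ} (hd : d ≠ 0) :
    toQuantumTorus (Esq d) = E qhUnit d ^ 2 := by
  rw [Esq, toQuantumTorus_powT, toQuantumTorus_Edlog_one hd]

theorem toQuantumTorus_of_mulT_Edlog_eq_oneT {U : T13} {lam : Rcal} {d : ℕ × ℕ} (hd : d ≠ 0)
    (hU : mulT U (Edlog lam d) = oneT) :
    toQuantumTorus U = series d (rescale (lam : FF) (dilog qhUnit⁻¹)) := by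
  have hleft := congrArg toQuantumTorus hU
  rw [toQuantumTorus_mulT, toQuantumTorus_oneT, toQuantumTorus_Edlog lam hd] at hleft
  refine left_inv_eq_right_inv hleft ?_
  rw [← series_mul hd, rescale_dilog_mul_rescale_dilog_inv not_isOfFinOrder_qhUnit, series_one hd]

theorem toQuantumTorus_Ppartial {U V : T13} (hU : mulT U (Edlog (-qhR) (2, 2)) = oneT)
    (hV : mulT V (Edlog (-qhinvR) (2, 2)) = oneT) (N : ℕ) :
    toQuantumTorus (Ppartial U V N) =
      ((List.range N).map fun i ↦ E qhUnit (i + 1, i) ^ 2).prod *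
        (E qhUnit (1, 1) ^ 4 * imaginaryFactor qhUnit (2, 2)) *
        ((List.range N).reverse.map fun i ↦ E qhUnit (i, i + 1) ^ 2).prod := by
  have hne : ((2, 2) : ℕ × ℕ) ≠ 0 := by simp
  have hUV : toQuantumTorus U * toQuantumTorus V = imaginaryFactor qhUnit (2, 2) := by
    rw [toQuantumTorus_of_mulT_Edlog_eq_oneT hne hU, toQuantumTorus_of_mulT_Edlog_eq_oneT hne hV]
    simp [imaginaryFactor, qhR, qhinvR]
  have h₁ (i : ℕ) : toQuantumTorus (Esq (i + 1, i)) = E qhUnit (i + 1, i) ^ 2 :=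
    toQuantumTorus_Esq (by simp)
  have h₂ (i : ℕ) : toQuantumTorus (Esq (i, i + 1)) = E qhUnit (i, i + 1) ^ 2 :=
    toQuantumTorus_Esq (by simp)
  rw [Ppartial, toQuantumTorus_prodT]
  simp only [List.map_append, List.prod_append, List.map_map, Function.comp_def, h₁, h₂,
    List.map_cons, List.prod_cons, List.map_nil, List.prod_nil, mul_one, toQuantumTorus_powT,
    toQuantumTorus_Edlog_one (d := (1, 1)) (by simp), hUV, mul_assoc]

end RationalFunctions

end QuantumDilogarithm

open QuantumDilogarithm

/-- In the quantum torus `𝕋`, the partial products `P_N` (with the two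
middle factors the inverses `U` of `E(-q^{1/2}t^{(2,2)})` and `V` of
`E(-q^{-1/2}t^{(2,2)})`) converge coefficientwise as `N → ∞`, with limit
`E(t^{(0,1)})² · E(t^{(1,0)})²`. -/
theorem quantum_dilog_identity (U V : T13)
    (hU₁ : mulT U (Edlog (-qhR) (2, 2)) = oneT) (hU₂ : mulT (Edlog (-qhR) (2, 2)) U = oneT)
    (hV₁ : mulT V (Edlog (-qhinvR) (2, 2)) = oneT)
    (hV₂ : mulT (Edlog (-qhinvR) (2, 2)) V = oneT) :
    ∀ e : ℕ × ℕ, ∃ N₀ : ℕ, ∀ N : ℕ, N₀ ≤ N →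
      Ppartial U V N e = mulT (Esq (0, 1)) (Esq (1, 0)) e := by
  intro e
  refine ⟨e.1 + e.2, fun N hN ↦ Subtype.ext ?_⟩
  have h := truncate_sq_mul_sq (w := e) not_isOfFinOrder_qhUnit
    (Prod.mk_le_mk.2 ⟨by omega, by omega⟩ : e ≤ (N, N))
  rw [← toQuantumTorus_Ppartial hU₁ hV₁, ← toQuantumTorus_Esq (by simp),
    ← toQuantumTorus_Esq (by simp), ← toQuantumTorus_mulT] at h
  exact (QuantumTorus.truncate_eq_truncate.1 h e le_rfl).symm
end
end
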